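/- For every t ∈ (0,1), the Hausdorff dimension of C_t is strictly less than 1 if and only if C_t has an exact overlap. -/

import Mathlib

open Filter Topology

/-- The digit set `Ω_t = {0, 3t, 3, 3t+3}`. -/
def Omega (t : ℝ) : Set ℝ := {0, 3*t, 3, 3*t+3}

/-- The projection `C_t` of the four corner Cantor set:
the set of sums `∑_{i≥1} d_i 4^{-i}` with all digits `d_i ∈ Ω_t`. -/
noncomputable def cornerC (t : ℝ) : Set ℝ :=
  {x | ∃ d : ℕ → ℝ, (∀ i, d i ∈ Omega t) ∧ x = ∑' i : ℕ, d i / 4^(i+1)}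

/-- `C_t` has an exact overlap: two distinct finite digit sequences of the same
length `k ≥ 1` with equal weighted sums. -/
def HasExactOverlap (t : ℝ) : Prop :=
  ∃ k : ℕ, 0 < k ∧ ∃ c d : Fin k → ℝ,
    (∀ n, c n ∈ Omega t) ∧ (∀ n, d n ∈ Omega t) ∧ c ≠ d ∧
    ∑ n : Fin k, c n / 4^((n : ℕ)+1) = ∑ n : Fin k, d n / 4^((n : ℕ)+1)

/-!
If two words of length `k` have the same value, then `C_t` is covered, at scale `4 ^ (-k * j)`, by
`(4 ^ k - 1) ^ j` intervals, so its dimension is less than `1`.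

Conversely, suppose that there are no exact overlaps. The values of the words of length `n` are then
`4 ^ (-4 * n)`-separated for infinitely many `n`: a failure of separation is a rational
approximation of `-t` so good that two consecutive failures give the same rational number, so if
separation fails for all large `n`, this number is `-t` and produces an exact overlap. Now consider
the truncations of the self-similar measure on `C_t`, which are convolutions of dilates of the
uniform measure on the four digits. Their entropy at each scale increases with the number of factors
and is bounded, hence for suitable large `n` convolving with the law of the words of length `n`
hardly raises the entropy at the scales from `4 ^ (-n)` down past `4 ^ (-4 * n)`. If `dimH C_t < 1`,
the entropy is not full at those scales, and an inverse theorem in the spirit of Hochman applies: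
convolving with the uniform measure on a set hardly raises the entropy only if the set is small at
those scales. Hence the number of values of the words of length `n` is, up to a small exponential
factor, the number of intervals of length `4 ^ (-n)` needed to cover `C_t`. But by separation there
are `4 ^ n` values, and `dimH C_t < 1` means that exponentially fewer intervals suffice.

For the inverse theorem, a set many of whose points can be paired at distances within a range of
scales has convolution powers that contain sums of many independent coins of comparable size; these
spread out and have nearly full entropy at the next scales, whereas convolving with the `m`-th power
raises the entropy by at most `m` times as much as convolving once. A set without such pairs at most
scales is small by a Kraft inequality.
-/

namespace FourCorner

open AddMonoidAlgebra Real Finset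
open scoped NNReal Pointwise

/-! ### Entropy of finitely supported measures -/

section Entropy

variable {G : Type*}

/-- Shannon entropy `-∑ μ(x) log μ(x)` of a finitely supported measure on `G`. Such measures are
the elements of the semiring `ℝ≥0[G]`, in which multiplication is convolution. -/
noncomputable def entropy (μ : ℝ≥0[G]) : ℝ :=
  μ.coeff.sum fun _ p => negMulLog p

/-- The total mass of a finitely supported measure. -/
noncomputable def mass [AddMonoid G] : ℝ≥0[G] →ₐ[ℝ≥0] ℝ≥0 :=
  AddMonoidAlgebra.lift ℝ≥0 ℝ≥0 G 1

/-- The entropy lost when two atoms of masses `a` and `b` are merged. -/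
noncomputable def mergeLoss (a b : ℝ≥0) : ℝ :=
  negMulLog a + negMulLog b - negMulLog (a + b : ℝ≥0)

/-- The entropy lost when two measures are added. -/
noncomputable def entropyLoss (μ ν : ℝ≥0[G]) : ℝ :=
  entropy μ + entropy ν - entropy (μ + ν)

lemma mul_log_sub_le {a s A S : ℝ} (ha : 0 ≤ a) (has : a ≤ s) (hA : 0 < A) (hAS : A ≤ S) :
    a * log s - a * log a ≤ a * log S - a * log A + s * A / S - a := by
  have hS : 0 < S := hA.trans_le hAS
  obtain rfl | ha := ha.eq_or_lt
  · simpa using div_nonneg (mul_nonneg has hA.le) hS.le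
  have hs : 0 < s := ha.trans_le has
  have log_ratio_le : log (s * A / (a * S)) ≤ s * A / (a * S) - 1 :=
    log_le_sub_one_of_pos (by positivity)
  rw [log_div (by positivity) (by positivity), log_mul hs.ne' hA.ne', log_mul ha.ne' hS.ne']
    at log_ratio_le
  have scaled := mul_le_mul_of_nonneg_left log_ratio_le ha.le
  have cancel : a * (s * A / (a * S) - 1) = s * A / S - a := by field_simp
  linarith

lemma log_sum_inequality {a s a' s' : ℝ} (ha : 0 ≤ a) (has : a ≤ s) (ha' : 0 ≤ a')
    (has' : a' ≤ s') :
    (a * log s - a * log a) + (a' * log s' - a' * log a') ≤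
      (a + a') * log (s + s') - (a + a') * log (a + a') := by
  obtain h | h := (add_nonneg ha ha').eq_or_lt
  · obtain ⟨rfl, rfl⟩ := (add_eq_zero_iff_of_nonneg ha ha').1 h.symm
    simp
  have hs : 0 < s + s' := h.trans_le (add_le_add has has')
  have le₁ := mul_log_sub_le ha has h (add_le_add has has')
  have le₂ := mul_log_sub_le ha' has' h (add_le_add has has')
  have weights : s * (a + a') / (s + s') + s' * (a + a') / (s + s') = a + a' := by field_simp
  linarith

lemma mergeLoss_eq (a b : ℝ≥0) :
    mergeLoss a b = (a * log (a + b) - a * log a) + (b * log (a + b) - b * log b) := by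
  simp only [mergeLoss, negMulLog, NNReal.coe_add]
  ring

lemma mergeLoss_add_le (a b a' b' : ℝ≥0) :
    mergeLoss a b + mergeLoss a' b' ≤ mergeLoss (a + a') (b + b') := by
  have left := log_sum_inequality (a := a) (s := a + b) (a' := a') (s' := a' + b')
    (by simp) (by simp) (by simp) (by simp)
  have right := log_sum_inequality (a := b) (s := a + b) (a' := b') (s' := a' + b')
    (by simp) (by simp) (by simp) (by simp)
  simp only [mergeLoss_eq, NNReal.coe_add, add_add_add_comm (a : ℝ) a' b b']
  linarith

lemma sum_mergeLoss_le {ι : Type*} (S : Finset ι) (a b : ι → ℝ≥0) :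
    ∑ i ∈ S, mergeLoss (a i) (b i) ≤ mergeLoss (∑ i ∈ S, a i) (∑ i ∈ S, b i) := by
  classical
  induction S using Finset.induction_on with
  | empty => simp [mergeLoss]
  | insert i S hi ih =>
    simp only [sum_insert hi]
    exact (add_le_add_right ih _).trans (mergeLoss_add_le _ _ _ _)

lemma entropy_eq_sum {μ : ℝ≥0[G]} {S : Finset G} (h : μ.coeff.support ⊆ S) :
    entropy μ = ∑ x ∈ S, negMulLog (μ.coeff x) :=
  Finsupp.sum_of_support_subset _ h _ (by simp)

@[simp] lemma entropy_zero : entropy (0 : ℝ≥0[G]) = 0 := by simp [entropy]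

@[simp] lemma entropy_single (x : G) (c : ℝ≥0) : entropy (single x c) = negMulLog c := by
  simp [entropy]

lemma support_coeff_add_subset [DecidableEq G] (μ ν : ℝ≥0[G]) :
    (μ + ν).coeff.support ⊆ μ.coeff.support ∪ ν.coeff.support :=
  Finsupp.support_add

lemma coeff_sum_single_apply {ι : Type*} [DecidableEq G] (I : Finset ι) (f : ι → G) (c : ι → ℝ≥0)
    (x : G) :
    (∑ i ∈ I, single (f i) (c i)).coeff x = ∑ i ∈ I with f i = x, c i := by
  simp [Finsupp.finsetSum_apply, Finsupp.single_apply, sum_filter]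

lemma entropy_sum_single {ι : Type*} {I : Finset ι} {f : ι → G} (hf : Set.InjOn f I)
    (c : ι → ℝ≥0) :
    entropy (∑ i ∈ I, single (f i) (c i)) = ∑ i ∈ I, negMulLog (c i) := by
  classical
  have coeff_f : ∀ i ∈ I, (∑ i ∈ I, single (f i) (c i)).coeff (f i) = c i := by
    intro i hi
    have fiber : ({j ∈ I | f j = f i} : Finset ι) = {i} := by
      ext j
      simp only [mem_filter, mem_singleton]
      constructor
      · exact fun h => hf h.1 hi h.2
      · rintro rfl
        exact ⟨hi, rfl⟩
    rw [coeff_sum_single_apply, fiber, sum_singleton]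
  have support_subset : (∑ i ∈ I, single (f i) (c i)).coeff.support ⊆ I.image f := by
    intro x hx
    rw [Finsupp.mem_support_iff, coeff_sum_single_apply] at hx
    obtain ⟨i, hi, -⟩ := exists_ne_zero_of_sum_ne_zero hx
    exact mem_image.2 ⟨i, mem_filter.1 hi⟩
  rw [entropy_eq_sum support_subset, sum_image hf]
  exact sum_congr rfl fun i hi => by rw [coeff_f i hi]

/-- The uniform probability measure on `E` (the zero measure if `E` is empty). -/
noncomputable def uniform (E : Finset G) : ℝ≥0[G] :=
  ∑ x ∈ E, single x (#E : ℝ≥0)⁻¹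

lemma coeff_uniform_apply [DecidableEq G] (E : Finset G) (x : G) :
    (uniform E).coeff x = if x ∈ E then (#E : ℝ≥0)⁻¹ else 0 := by
  simp [uniform, Finsupp.finsetSum_apply, Finsupp.single_apply]

lemma support_coeff_uniform_subset (E : Finset G) : (uniform E).coeff.support ⊆ E := by
  classical
  intro x hx
  by_contra h
  simp [coeff_uniform_apply, h] at hx

lemma entropy_uniform (E : Finset G) : entropy (uniform E) = log #E := by
  obtain rfl | hE := E.eq_empty_or_nonempty
  · simp [uniform]
  have hcard : (#E : ℝ) ≠ 0 := by simp [hE.ne_empty]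
  rw [uniform, entropy_sum_single (f := fun x => x) Function.injective_id.injOn]
  simp [negMulLog, hcard]

lemma mapDomain_eq_sum_single {H : Type*} (f : G → H) (μ : ℝ≥0[G]) :
    mapDomain f μ = ∑ x ∈ μ.coeff.support, single (f x) (μ.coeff x) := by
  conv_lhs => rw [← sum_coeff_single μ, mapDomain_sum]
  simp [Finsupp.sum]

lemma entropy_mapDomain {H : Type*} {f : G → H} (hf : Function.Injective f) (μ : ℝ≥0[G]) :
    entropy (mapDomain f μ) = entropy μ := by
  rw [mapDomain_eq_sum_single, entropy_sum_single hf.injOn, entropy_eq_sum subset_rfl]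

lemma entropyLoss_eq_sum {μ ν : ℝ≥0[G]} {S : Finset G} (hμ : μ.coeff.support ⊆ S)
    (hν : ν.coeff.support ⊆ S) :
    entropyLoss μ ν = ∑ x ∈ S, mergeLoss (μ.coeff x) (ν.coeff x) := by
  classical
  rw [entropyLoss, entropy_eq_sum hμ, entropy_eq_sum hν,
    entropy_eq_sum ((support_coeff_add_subset μ ν).trans (union_subset hμ hν)),
    ← sum_add_distrib, ← sum_sub_distrib]
  rfl

lemma entropyLoss_add_le (μ ν μ' ν' : ℝ≥0[G]) :
    entropyLoss μ ν + entropyLoss μ' ν' ≤ entropyLoss (μ + μ') (ν + ν') := by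
  classical
  set S := (μ.coeff.support ∪ μ'.coeff.support) ∪ (ν.coeff.support ∪ ν'.coeff.support)
  have hμ : μ.coeff.support ∪ μ'.coeff.support ⊆ S := subset_union_left
  have hν : ν.coeff.support ∪ ν'.coeff.support ⊆ S := subset_union_right
  rw [entropyLoss_eq_sum (union_subset_left hμ) (union_subset_left hν),
    entropyLoss_eq_sum (union_subset_right hμ) (union_subset_right hν),
    entropyLoss_eq_sum ((support_coeff_add_subset μ μ').trans hμ)
      ((support_coeff_add_subset ν ν').trans hν), ← sum_add_distrib]
  exact sum_le_sum fun x _ => mergeLoss_add_le _ _ _ _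

variable [AddMonoid G]

@[simp] lemma mass_single (x : G) (c : ℝ≥0) : mass (single x c) = c := by simp [mass]

lemma mass_eq_sum {μ : ℝ≥0[G]} {S : Finset G} (h : μ.coeff.support ⊆ S) :
    mass μ = ∑ x ∈ S, μ.coeff x := by
  rw [mass, lift_apply, Finsupp.sum_of_support_subset _ h _ (by simp)]
  simp

lemma sum_coe_coeff {μ : ℝ≥0[G]} {S : Finset G} (h : μ.coeff.support ⊆ S) (hμ : mass μ = 1) :
    ∑ x ∈ S, (μ.coeff x : ℝ) = 1 := by
  exact_mod_cast (mass_eq_sum h).symm.trans hμ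

lemma entropyLoss_le_mergeLoss_mass (μ ν : ℝ≥0[G]) :
    entropyLoss μ ν ≤ mergeLoss (mass μ) (mass ν) := by
  classical
  rw [entropyLoss_eq_sum subset_union_left subset_union_right, mass_eq_sum subset_union_left,
    mass_eq_sum subset_union_right]
  exact sum_mergeLoss_le _ _ _

lemma mul_eq_sum_single (μ ν : ℝ≥0[G]) :
    μ * ν = ∑ p ∈ μ.coeff.support ×ˢ ν.coeff.support,
      single (p.1 + p.2) (μ.coeff p.1 * ν.coeff p.2) := by
  rw [sum_product]
  exact AddMonoidAlgebra.mul_def μ ν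

lemma entropy_mul_of_injOn {μ ν : ℝ≥0[G]}
    (h : Set.InjOn (fun p : G × G => p.1 + p.2) (μ.coeff.support ×ˢ ν.coeff.support)) :
    entropy (μ * ν) = mass ν * entropy μ + mass μ * entropy ν := by
  rw [mul_eq_sum_single, entropy_sum_single (by simpa using h), sum_product]
  simp only [NNReal.coe_mul, negMulLog_mul, sum_add_distrib]
  simp only [← sum_mul, ← mul_sum, entropy_eq_sum subset_rfl, mass_eq_sum subset_rfl,
    NNReal.coe_sum]

lemma entropy_mul_single [IsRightCancelAdd G] (μ : ℝ≥0[G]) (y : G) (c : ℝ≥0) :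
    entropy (μ * single y c) = c * entropy μ + mass μ * negMulLog c := by
  rw [entropy_mul_of_injOn, mass_single, entropy_single]
  rintro ⟨x, z⟩ ⟨-, hz⟩ ⟨x', z'⟩ ⟨-, hz'⟩ h
  have eq_y : ∀ w ∈ (single y c : ℝ≥0[G]).coeff.support, w = y := fun w hw =>
    mem_singleton.1 (Finsupp.support_single_subset hw)
  obtain rfl := eq_y z hz
  obtain rfl := eq_y z' hz'
  exact Prod.ext (add_right_cancel h) rfl

lemma mass_mul_entropyLoss_le [IsRightCancelAdd G] (μ ν ρ : ℝ≥0[G]) :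
    mass ρ * entropyLoss μ ν ≤ entropyLoss (μ * ρ) (ν * ρ) := by
  induction ρ using AddMonoidAlgebra.induction_linear with
  | zero => simp [entropyLoss]
  | add ρ ρ' h h' =>
    rw [mul_add, mul_add, map_add, NNReal.coe_add, add_mul]
    exact (add_le_add h h').trans (entropyLoss_add_le _ _ _ _)
  | single y c =>
    simp only [entropyLoss, ← add_mul, entropy_mul_single, mass_single, map_add, NNReal.coe_add]
    linarith

lemma entropy_sub_entropy_mul_superadditive [IsRightCancelAdd G] (μ ν : ℝ≥0[G]) {ρ : ℝ≥0[G]}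
    (hρ : mass ρ = 1) :
    (entropy μ - entropy (μ * ρ)) + (entropy ν - entropy (ν * ρ)) ≤
      entropy (μ + ν) - entropy ((μ + ν) * ρ) := by
  have h := mass_mul_entropyLoss_le μ ν ρ
  rw [hρ, NNReal.coe_one, one_mul, entropyLoss, entropyLoss, ← add_mul] at h
  linarith

lemma mass_mul_entropy_sub_entropy_mul_le {G : Type*} [AddCommMonoid G] [IsCancelAdd G]
    (μ ν : ℝ≥0[G]) {ρ : ℝ≥0[G]} (hρ : mass ρ = 1) :
    mass ν * (entropy μ - entropy (μ * ρ)) ≤ entropy (μ * ν) - entropy (μ * ν * ρ) := by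
  induction ν using AddMonoidAlgebra.induction_linear with
  | zero => simp
  | add ν ν' h h' =>
    have superadd := entropy_sub_entropy_mul_superadditive (μ * ν) (μ * ν') hρ
    rw [mul_add, map_add, NNReal.coe_add]
    linarith
  | single y c =>
    rw [mul_right_comm, entropy_mul_single, entropy_mul_single, map_mul, hρ, mul_one, mass_single]
    linarith

lemma entropy_mul_pow_sub_le {G : Type*} [AddCommMonoid G] [IsCancelAdd G] (μ : ℝ≥0[G])
    {ρ : ℝ≥0[G]} (hρ : mass ρ = 1) (m : ℕ) :
    entropy (μ * ρ ^ m) - entropy μ ≤ m * (entropy (μ * ρ) - entropy μ) := by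
  induction m with
  | zero => simp
  | succ m ih =>
    have step := mass_mul_entropy_sub_entropy_mul_le μ (ρ ^ m) hρ
    rw [map_pow, hρ, one_pow, NNReal.coe_one, one_mul, mul_assoc, ← pow_succ] at step
    push_cast
    linarith

lemma mass_mul_entropy_sub_negMulLog_le [IsRightCancelAdd G] (μ ρ : ℝ≥0[G]) :
    mass ρ * (entropy μ - negMulLog (mass μ)) ≤
      entropy (μ * ρ) - negMulLog (mass (μ * ρ)) := by
  induction ρ using AddMonoidAlgebra.induction_linear with
  | zero => simp
  | add ρ ρ' h h' =>
    have loss := entropyLoss_le_mergeLoss_mass (μ * ρ) (μ * ρ')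
    rw [entropyLoss, mergeLoss, ← map_add, ← mul_add] at loss
    rw [map_add, NNReal.coe_add]
    linarith
  | single y c =>
    rw [entropy_mul_single, map_mul, mass_single, NNReal.coe_mul, negMulLog_mul]
    linarith

lemma entropy_le_entropy_mul [IsRightCancelAdd G] {μ ρ : ℝ≥0[G]} (hμ : mass μ = 1)
    (hρ : mass ρ = 1) : entropy μ ≤ entropy (μ * ρ) := by
  simpa [hμ, hρ] using mass_mul_entropy_sub_negMulLog_le μ ρ

lemma negMulLog_le_mul_neg_log_add {p q : ℝ} (hp : 0 ≤ p) (hq : 0 < q) :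
    negMulLog p ≤ p * -log q + (q - p) := by
  obtain rfl | hp := hp.eq_or_lt
  · simpa using hq.le
  have h := mul_le_mul_of_nonneg_left (log_le_sub_one_of_pos (div_pos hq hp)) hp.le
  rw [log_div hq.ne' hp.ne', mul_sub_one, mul_div_cancel₀ q hp.ne'] at h
  rw [negMulLog]
  linarith

lemma gibbs_inequality {μ : ℝ≥0[G]} {S : Finset G} (hS : μ.coeff.support ⊆ S) (hμ : mass μ = 1)
    {q : G → ℝ} (hq : ∀ x ∈ S, 0 < q x) (hq_sum : ∑ x ∈ S, q x ≤ 1) :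
    entropy μ ≤ ∑ x ∈ S, (μ.coeff x : ℝ) * -log (q x) := by
  have termwise := sum_le_sum fun x hx =>
    negMulLog_le_mul_neg_log_add (μ.coeff x).coe_nonneg (hq x hx)
  rw [sum_add_distrib, sum_sub_distrib, sum_coe_coeff hS hμ] at termwise
  rw [entropy_eq_sum hS]
  linarith

lemma entropy_le_log_card {μ : ℝ≥0[G]} {S : Finset G} (hS : μ.coeff.support ⊆ S)
    (hμ : mass μ = 1) : entropy μ ≤ log #S := by
  have hS' : S.Nonempty := by
    rw [nonempty_iff_ne_empty]
    rintro rfl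
    simp [mass_eq_sum hS] at hμ
  have hcard : (0 : ℝ) < #S := by exact_mod_cast hS'.card_pos
  have h := gibbs_inequality hS hμ (q := fun _ => (#S : ℝ)⁻¹) (fun _ _ => by positivity)
    (by simp [hcard.ne'])
  simpa [← sum_mul, sum_coe_coeff hS hμ] using h

lemma neg_log_le_entropy {μ : ℝ≥0[G]} {M : ℝ} (hμ : mass μ = 1)
    (hM : ∀ x, (μ.coeff x : ℝ) ≤ M) : -log M ≤ entropy μ := by
  rw [entropy_eq_sum subset_rfl]
  calc -log M = ∑ x ∈ μ.coeff.support, (μ.coeff x : ℝ) * -log M := by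
        rw [← sum_mul, sum_coe_coeff subset_rfl hμ, one_mul]
    _ ≤ ∑ x ∈ μ.coeff.support, negMulLog (μ.coeff x) := by
        refine sum_le_sum fun x hx => ?_
        have hx' : (0 : ℝ) < μ.coeff x :=
          NNReal.coe_pos.2 (pos_iff_ne_zero.2 (Finsupp.mem_support_iff.1 hx))
        rw [negMulLog, neg_mul_comm]
        gcongr
        exact hM x

lemma mem_support_coeff_mul {μ ν : ℝ≥0[G]} {z : G} (hz : z ∈ (μ * ν).coeff.support) :
    ∃ x ∈ μ.coeff.support, ∃ y ∈ ν.coeff.support, x + y = z := by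
  classical
  exact Finset.mem_add.1 (AddMonoidAlgebra.support_coeff_mul_subset μ ν hz)

lemma mass_uniform {E : Finset G} (hE : E.Nonempty) : mass (uniform E) = 1 := by
  have hcard : (#E : ℝ≥0) ≠ 0 := by simp [hE.ne_empty]
  simp [uniform, hcard]

lemma uniform_mul_uniform {A B C : Finset G} (maps_to : ∀ a ∈ A, ∀ b ∈ B, a + b ∈ C)
    (inj : Set.InjOn (fun p : G × G => p.1 + p.2) (A ×ˢ B)) (card_le : #C ≤ #A * #B) :
    uniform A * uniform B = uniform C := by
  classical
  have image_eq : (A ×ˢ B).image (fun p => p.1 + p.2) = C := by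
    refine eq_of_subset_of_card_le ?_ ?_
    · rintro _ h
      obtain ⟨p, hp, rfl⟩ := mem_image.1 h
      exact maps_to _ (mem_product.1 hp).1 _ (mem_product.1 hp).2
    · rwa [card_image_of_injOn (by simpa using inj), card_product]
  have card_eq : #C = #A * #B := by
    rw [← image_eq, card_image_of_injOn (by simpa using inj), card_product]
  rw [uniform, uniform, uniform, sum_mul_sum, ← sum_product', card_eq]
  conv_rhs => rw [← image_eq, sum_image (by simpa using inj)]
  simp [mul_comm]

lemma mass_mapDomain {H : Type*} [AddMonoid H] (f : G → H) (μ : ℝ≥0[G]) :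
    mass (mapDomain f μ) = mass μ := by
  rw [mapDomain_eq_sum_single, map_sum, mass_eq_sum subset_rfl]
  simp

end Entropy

/-! ### Entropy at a given scale -/

section Scales

/-- The push-forward of a measure on `ℤ` under multiplication by `m`. -/
noncomputable def dilate (m : ℤ) : ℝ≥0[ℤ] →+* ℝ≥0[ℤ] :=
  mapDomainRingHom ℝ≥0 (AddMonoidHom.mulLeft m)

/-- The uniform measure on `{0, …, 4 ^ k - 1}`. -/
noncomputable def blockMeasure (k : ℕ) : ℝ≥0[ℤ] :=
  uniform (Ico 0 (4 ^ k))

/-- The part of the entropy of `μ` that is seen at scale `4 ^ k`: smoothing with one more base `4`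
digit increases the entropy by `mass μ * log 4 - scaleEntropy k μ`. -/
noncomputable def scaleEntropy (k : ℕ) (μ : ℝ≥0[ℤ]) : ℝ :=
  entropy (μ * blockMeasure k) - entropy (μ * blockMeasure (k + 1)) + mass μ * log 4

/-- The entropy of `μ` seen at the scales `4 ^ p, …, 4 ^ (p + d - 1)`. -/
noncomputable def windowEntropy (p d : ℕ) (μ : ℝ≥0[ℤ]) : ℝ :=
  ∑ j ∈ range d, scaleEntropy (p + j) μ

lemma dilate_single (m x : ℤ) (c : ℝ≥0) : dilate m (single x c) = single (m * x) c :=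
  mapDomain_single

@[simp] lemma mass_dilate (m : ℤ) (μ : ℝ≥0[ℤ]) : mass (dilate m μ) = mass μ :=
  mass_mapDomain _ _

lemma entropy_dilate {m : ℤ} (hm : m ≠ 0) (μ : ℝ≥0[ℤ]) : entropy (dilate m μ) = entropy μ :=
  entropy_mapDomain (mul_right_injective₀ hm) μ

lemma dilate_uniform {m : ℤ} (hm : m ≠ 0) (E : Finset ℤ) :
    dilate m (uniform E) = uniform (E.image (m * ·)) := by
  rw [uniform, uniform, map_sum, sum_image (mul_right_injective₀ hm).injOn,
    card_image_of_injective _ (mul_right_injective₀ hm)]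
  exact sum_congr rfl fun x _ => dilate_single m x _

lemma exists_mul_eq_of_mem_support_dilate {m : ℤ} {μ : ℝ≥0[ℤ]} {z : ℤ}
    (hz : z ∈ (dilate m μ).coeff.support) : ∃ x ∈ μ.coeff.support, m * x = z := by
  classical
  exact mem_image.1 (Finsupp.mapDomain_support hz)

lemma uniform_Ico_mul {m n : ℤ} (hm : 0 < m) (hn : 0 ≤ n) :
    uniform (Ico 0 (m * n)) = uniform (Ico 0 m) * dilate m (uniform (Ico 0 n)) := by
  rw [dilate_uniform hm.ne', uniform_mul_uniform]
  · intro a ha b hb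
    obtain ⟨x, hx, rfl⟩ := mem_image.1 hb
    rw [mem_Ico] at *
    constructor <;> nlinarith
  · rintro ⟨a, b⟩ ⟨ha, hb⟩ ⟨a', b'⟩ ⟨ha', hb'⟩ h
    obtain ⟨x, -, rfl⟩ := mem_image.1 hb
    obtain ⟨x', -, rfl⟩ := mem_image.1 hb'
    simp only [coe_Ico, Set.mem_Ico] at ha ha' h
    have haa' : a = a' := by
      rw [← Int.emod_eq_of_lt ha.1 ha.2, ← Int.emod_eq_of_lt ha'.1 ha'.2,
        ← Int.add_mul_emod_self_left a m x, h, Int.add_mul_emod_self_left]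
    exact Prod.ext haa' (by simpa [haa'] using h)
  · rw [card_image_of_injective _ (mul_right_injective₀ hm.ne')]
    simp [Int.toNat_mul hm.le hn]

@[simp] lemma mass_blockMeasure (k : ℕ) : mass (blockMeasure k) = 1 :=
  mass_uniform (nonempty_Ico.2 (by positivity))

lemma card_Ico_four_pow (k : ℕ) : #(Ico (0 : ℤ) (4 ^ k)) = 4 ^ k := by
  rw [Int.card_Ico, sub_zero]
  exact_mod_cast Int.toNat_natCast (4 ^ k)

@[simp] lemma entropy_blockMeasure (k : ℕ) : entropy (blockMeasure k) = k * log 4 := by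
  rw [blockMeasure, entropy_uniform, card_Ico_four_pow]
  simp

lemma blockMeasure_succ (k : ℕ) :
    blockMeasure (k + 1) = blockMeasure k * dilate (4 ^ k) (blockMeasure 1) := by
  rw [blockMeasure, blockMeasure, blockMeasure, pow_succ, pow_one,
    uniform_Ico_mul (by positivity) (by norm_num)]

lemma blockMeasure_succ' (k : ℕ) :
    blockMeasure (k + 1) = blockMeasure 1 * dilate 4 (blockMeasure k) := by
  rw [blockMeasure, blockMeasure, blockMeasure, pow_succ', pow_one,
    uniform_Ico_mul (by norm_num) (by positivity)]

lemma scaleEntropy_add_le (k : ℕ) (μ ν : ℝ≥0[ℤ]) :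
    scaleEntropy k μ + scaleEntropy k ν ≤ scaleEntropy k (μ + ν) := by
  have h := entropy_sub_entropy_mul_superadditive (μ * blockMeasure k) (ν * blockMeasure k)
    (ρ := dilate (4 ^ k) (blockMeasure 1)) (by simp)
  rw [← add_mul, mul_assoc, mul_assoc, mul_assoc, ← blockMeasure_succ] at h
  rw [scaleEntropy, scaleEntropy, scaleEntropy, map_add, NNReal.coe_add]
  linarith

@[simp] lemma scaleEntropy_zero (k : ℕ) : scaleEntropy k 0 = 0 := by simp [scaleEntropy]

lemma scaleEntropy_mul_single (k : ℕ) (μ : ℝ≥0[ℤ]) (y : ℤ) (c : ℝ≥0) :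
    scaleEntropy k (μ * single y c) = c * scaleEntropy k μ := by
  rw [scaleEntropy, scaleEntropy, mul_right_comm, entropy_mul_single,
    mul_right_comm μ _ (blockMeasure (k + 1)), entropy_mul_single]
  simp only [map_mul, mass_blockMeasure, mass_single, mul_one, NNReal.coe_mul]
  ring

lemma mass_mul_scaleEntropy_le (k : ℕ) (μ ρ : ℝ≥0[ℤ]) :
    mass ρ * scaleEntropy k μ ≤ scaleEntropy k (μ * ρ) := by
  induction ρ using AddMonoidAlgebra.induction_linear with
  | zero => simp
  | add ρ ρ' h h' =>
    rw [mul_add, map_add, NNReal.coe_add, add_mul]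
    exact (add_le_add h h').trans (scaleEntropy_add_le _ _ _)
  | single y c => rw [scaleEntropy_mul_single, mass_single]

lemma scaleEntropy_nonneg (k : ℕ) (μ : ℝ≥0[ℤ]) : 0 ≤ scaleEntropy k μ := by
  have scaleEntropy_one : scaleEntropy k 1 = 0 := by
    simp only [scaleEntropy, one_mul, entropy_blockMeasure, map_one, NNReal.coe_one]
    push_cast
    ring
  simpa [scaleEntropy_one] using mass_mul_scaleEntropy_le k 1 μ

lemma scaleEntropy_le_log_four (k : ℕ) {μ : ℝ≥0[ℤ]} (hμ : mass μ = 1) :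
    scaleEntropy k μ ≤ log 4 := by
  have h := entropy_le_entropy_mul (μ := μ * blockMeasure k)
    (ρ := dilate (4 ^ k) (blockMeasure 1)) (by simp [hμ]) (by simp)
  rw [mul_assoc, ← blockMeasure_succ] at h
  rw [scaleEntropy, hμ, NNReal.coe_one]
  linarith

lemma scaleEntropy_dilate (k : ℕ) (μ : ℝ≥0[ℤ]) :
    scaleEntropy (k + 1) (dilate 4 μ) = scaleEntropy k μ := by
  have entropy_dilate_mul_block : ∀ ν : ℝ≥0[ℤ],
      entropy (dilate 4 ν * blockMeasure 1) = entropy ν + mass ν * log 4 := by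
    intro ν
    rw [entropy_mul_of_injOn, entropy_dilate (by norm_num), entropy_blockMeasure]
    · simp
    · rintro ⟨a, b⟩ ⟨ha, hb⟩ ⟨a', b'⟩ ⟨ha', hb'⟩ h
      obtain ⟨x, -, rfl⟩ := exists_mul_eq_of_mem_support_dilate ha
      obtain ⟨x', -, rfl⟩ := exists_mul_eq_of_mem_support_dilate ha'
      have hb := mem_Ico.1 (support_coeff_uniform_subset _ hb)
      have hb' := mem_Ico.1 (support_coeff_uniform_subset _ hb')
      simp only [pow_one] at hb hb' h
      ext <;> dsimp only <;> omega
  have entropy_succ : ∀ j, entropy (dilate 4 μ * blockMeasure (j + 1)) =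
      entropy (μ * blockMeasure j) + mass μ * log 4 := by
    intro j
    rw [blockMeasure_succ', mul_comm (blockMeasure 1), ← mul_assoc, ← map_mul,
      entropy_dilate_mul_block, map_mul, mass_blockMeasure, mul_one]
  rw [scaleEntropy, scaleEntropy, entropy_succ, entropy_succ, mass_dilate]
  ring

lemma natCast_mul_log_four_le_entropy_mul_blockMeasure (k : ℕ) {μ : ℝ≥0[ℤ]} (hμ : mass μ = 1) :
    k * log 4 ≤ entropy (μ * blockMeasure k) := by
  have h := entropy_le_entropy_mul (mass_blockMeasure k) hμ
  rwa [entropy_blockMeasure, mul_comm (blockMeasure k)] at h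

lemma windowEntropy_eq (p d : ℕ) (μ : ℝ≥0[ℤ]) :
    windowEntropy p d μ = entropy (μ * blockMeasure p) - entropy (μ * blockMeasure (p + d)) +
      d * (mass μ * log 4) := by
  simp only [windowEntropy, scaleEntropy, sum_add_distrib, add_assoc p,
    sum_range_sub' fun j => entropy (μ * blockMeasure (p + j))]
  simp

lemma sum_windowEntropy_le {ι : Type*} (p d : ℕ) (I : Finset ι) (μ : ι → ℝ≥0[ℤ]) :
    ∑ i ∈ I, windowEntropy p d (μ i) ≤ windowEntropy p d (∑ i ∈ I, μ i) := by
  simp only [windowEntropy]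
  rw [sum_comm]
  refine sum_le_sum fun j _ => ?_
  induction I using Finset.cons_induction with
  | empty => simp
  | cons i I hi ih =>
    rw [sum_cons, sum_cons]
    exact (add_le_add_right ih _).trans (scaleEntropy_add_le _ _ _)

lemma windowEntropy_le_windowEntropy_add (p d : ℕ) (μ ν : ℝ≥0[ℤ]) :
    windowEntropy p d μ ≤ windowEntropy p d (μ + ν) :=
  sum_le_sum fun _ _ => (le_add_of_nonneg_right (scaleEntropy_nonneg _ ν)).trans
    (scaleEntropy_add_le _ μ ν)

lemma windowEntropy_mul_single (p d : ℕ) (μ : ℝ≥0[ℤ]) (y : ℤ) (c : ℝ≥0) :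
    windowEntropy p d (μ * single y c) = c * windowEntropy p d μ := by
  simp only [windowEntropy, scaleEntropy_mul_single, mul_sum]

lemma mass_mul_windowEntropy_le (p d : ℕ) (μ ρ : ℝ≥0[ℤ]) :
    mass ρ * windowEntropy p d μ ≤ windowEntropy p d (μ * ρ) := by
  rw [windowEntropy, mul_sum]
  exact sum_le_sum fun _ _ => mass_mul_scaleEntropy_le _ μ ρ

end Scales

/-! ### Sums of independent fair coins -/

section Coins

variable {ι : Type*}

/-- The law of a fair coin with values `0` and `s`. -/
noncomputable def coin (s : ℤ) : ℝ≥0[ℤ] :=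
  single 0 2⁻¹ + single s 2⁻¹

@[simp] lemma mass_coin (s : ℤ) : mass (coin s) = 1 := by
  rw [coin, map_add, mass_single, mass_single]
  exact_mod_cast NNReal.eq (by norm_num)

lemma mass_prod_coin (I : Finset ι) (s : ι → ℤ) : mass (∏ i ∈ I, coin (s i)) = 1 := by
  rw [map_prod]
  exact prod_eq_one fun i _ => mass_coin (s i)

lemma prod_coin (I : Finset ι) (s : ι → ℤ) :
    ∏ j ∈ I, coin (s j) = ∑ A ∈ I.powerset, single (∑ j ∈ A, s j) (2⁻¹ ^ #I) := by
  classical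
  simp only [coin, add_comm (single (0 : ℤ) _)]
  rw [prod_add]
  refine sum_congr rfl fun A hA => ?_
  rw [prod_single, prod_single, single_mul_single, prod_const, prod_const, ← pow_add, add_comm #A,
    card_sdiff_add_card_eq_card (mem_powerset.1 hA)]
  simp

lemma centralBinom_sq_mul_le (n : ℕ) : (2 * n + 1) * n.centralBinom ^ 2 ≤ 16 ^ n := by
  induction n with
  | zero => simp
  | succ n ih =>
    have succ_sq_pos : 0 < (n + 1) ^ 2 := by positivity
    refine Nat.le_of_mul_le_mul_left ?_ succ_sq_pos
    calc (n + 1) ^ 2 * ((2 * (n + 1) + 1) * (n + 1).centralBinom ^ 2)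
        = (2 * n + 3) * ((n + 1) * (n + 1).centralBinom) ^ 2 := by ring
      _ = (4 * (2 * n + 3) * (2 * n + 1)) * ((2 * n + 1) * n.centralBinom ^ 2) := by
          rw [Nat.succ_mul_centralBinom_succ]
          ring
      _ ≤ (16 * (n + 1) ^ 2) * 16 ^ n := Nat.mul_le_mul (by nlinarith) ih
      _ = (n + 1) ^ 2 * 16 ^ (n + 1) := by ring

lemma centralBinom_sixteen_pow_mul_le (L : ℕ) :
    (16 ^ L).centralBinom * 4 ^ L ≤ 2 ^ (2 * 16 ^ L) := by
  refine (Nat.pow_le_pow_iff_left two_ne_zero).1 ?_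
  calc ((16 ^ L).centralBinom * 4 ^ L) ^ 2 = 16 ^ L * (16 ^ L).centralBinom ^ 2 := by
        rw [mul_pow, ← pow_mul, mul_comm L, pow_mul, mul_comm]
        norm_num
    _ ≤ (2 * 16 ^ L + 1) * (16 ^ L).centralBinom ^ 2 := Nat.mul_le_mul_right _ (by omega)
    _ ≤ 16 ^ 16 ^ L := centralBinom_sq_mul_le _
    _ = (2 ^ (2 * 16 ^ L)) ^ 2 := by
        rw [← pow_mul, mul_right_comm, pow_mul]
        norm_num

lemma isAntichain_subset_sums_in_cell {s : ι → ℤ} {c : ℤ} (hc : 0 < c)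
    (hs : ∀ j, c ≤ s j) (z b : ℤ) :
    IsAntichain (· ⊆ ·) {A : Finset ι | (z - ∑ j ∈ A, s j) / c = b} := by
  classical
  intro A hA B hB hne hAB
  simp only [Set.mem_ofPred_eq] at hA hB
  obtain ⟨j, hjB, hjA⟩ := exists_of_ssubset (hAB.ssubset_of_ne hne)
  have sum_lt : s j + ∑ i ∈ A, s i ≤ ∑ i ∈ B, s i := by
    rw [← sum_insert hjA]
    exact sum_le_sum_of_subset_of_nonneg (insert_subset hjB hAB)
      fun i _ _ => hc.le.trans (hs i)
  have cell_lt := Int.ediv_le_ediv hc (show z - ∑ j ∈ B, s j + 1 * c ≤ z - ∑ j ∈ A, s j by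
    linarith [hs j])
  rw [Int.add_mul_ediv_right _ _ hc.ne'] at cell_lt
  omega

lemma littlewood_offord [Fintype ι] {s : ι → ℤ} {c : ℤ} (hc : 0 < c) (hs : ∀ j, c ≤ s j) (z : ℤ)
    (m : ℕ) :
    #{A : Finset ι | z - ∑ j ∈ A, s j ∈ Ico 0 (m * c)} ≤
      (Fintype.card ι).choose (Fintype.card ι / 2) * m := by
  have card_cells : #(Ico (0 : ℤ) m) = m := by simp
  conv_rhs => rw [← card_cells]
  refine card_le_mul_card_image_of_maps_to (f := fun A => (z - ∑ j ∈ A, s j) / c) ?_ _ ?_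
  · intro A hA
    have hA := mem_Ico.1 (mem_filter.1 hA).2
    exact mem_Ico.2 ⟨Int.ediv_nonneg hA.1 hc.le, Int.ediv_lt_of_lt_mul hc hA.2⟩
  · intro b _
    refine IsAntichain.sperner ((isAntichain_subset_sums_in_cell hc hs z b).subset ?_)
    intro A hA
    exact (mem_filter.1 hA).2

lemma coeff_prod_coin_mul_uniform_le [Fintype ι] (s : ι → ℤ) (E : Finset ℤ) (z : ℤ) :
    ((∏ j, coin (s j)) * uniform E).coeff z ≤
      #{A : Finset ι | z - ∑ j ∈ A, s j ∈ E} * (2⁻¹ ^ Fintype.card ι * (#E : ℝ≥0)⁻¹) := by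
  rw [prod_coin, powerset_univ, card_univ, uniform, sum_mul_sum, ← sum_product']
  simp only [single_mul_single]
  rw [coeff_sum_single_apply, sum_const, nsmul_eq_mul]
  gcongr
  refine card_le_card_of_injOn Prod.fst ?_ ?_
  · rintro ⟨A, x⟩ h
    obtain ⟨hx, rfl⟩ : x ∈ E ∧ ∑ j ∈ A, s j + x = z := by simpa using h
    simpa using hx
  · rintro ⟨A, x⟩ h ⟨A', x'⟩ h' (rfl : A = A')
    have h : ∑ j ∈ A, s j + x = z := (mem_filter.1 h).2
    have h' : ∑ j ∈ A, s j + x' = z := (mem_filter.1 h').2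
    exact Prod.ext rfl (add_left_cancel (h.trans h'.symm))

lemma mul_log_four_le_entropy_prod_coin [Fintype ι] {L k : ℕ} (hι : Fintype.card ι = 2 * 16 ^ L)
    (r : ℕ) {s : ι → ℤ} (hs : ∀ j, 4 ^ k ≤ s j) :
    ((k + L : ℕ) : ℝ) * log 4 ≤ entropy ((∏ j, coin (s j)) * blockMeasure (k + r)) := by
  have coeff_le : ∀ z, (((∏ j, coin (s j)) * blockMeasure (k + r)).coeff z : ℝ) ≤
      ((4 : ℝ) ^ (k + L))⁻¹ := by
    intro z
    have count := littlewood_offord (by positivity) hs z (4 ^ r)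
    have binom := Nat.mul_le_mul_right (4 ^ (k + r)) (centralBinom_sixteen_pow_mul_le L)
    have coeff_le := coeff_prod_coin_mul_uniform_le s (Ico 0 (4 ^ (k + r))) z
    push_cast at count
    rw [← pow_add, add_comm r k, hι, Nat.mul_div_cancel_left _ two_pos,
      ← Nat.centralBinom_eq_two_mul_choose] at count
    rw [card_Ico_four_pow, hι] at coeff_le
    refine (NNReal.coe_le_coe.2 coeff_le).trans ?_
    push_cast
    rw [inv_pow, ← mul_inv, ← div_eq_mul_inv, ← one_div,
      div_le_div_iff₀ (by positivity) (by positivity), one_mul]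
    norm_cast
    calc _ ≤ ((16 ^ L).centralBinom * 4 ^ r) * 4 ^ (k + L) := Nat.mul_le_mul_right _ count
      _ = (16 ^ L).centralBinom * 4 ^ L * 4 ^ (k + r) := by ring
      _ ≤ _ := binom
  have h := neg_log_le_entropy (by simp) coeff_le
  rwa [log_inv, neg_neg, log_pow] at h

/-- The integral of `f` with respect to a finitely supported measure. -/
noncomputable def expect {G : Type*} (f : G → ℝ) : ℝ≥0[G] →+ ℝ where
  toFun μ := μ.coeff.sum fun x p => p * f x
  map_zero' := by simp
  map_add' μ ν := Finsupp.sum_add_index' (by simp) (by intros; simp [add_mul])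

section Expect

variable {G : Type*}

lemma expect_eq_sum (f : G → ℝ) (μ : ℝ≥0[G]) :
    expect f μ = ∑ x ∈ μ.coeff.support, μ.coeff x * f x :=
  rfl

@[simp] lemma expect_single (f : G → ℝ) (x : G) (c : ℝ≥0) : expect f (single x c) = c * f x := by
  have h := Finsupp.sum_single_index (a := x) (b := c) (h := fun x p => (p : ℝ) * f x) (by simp)
  exact h

lemma expect_fun_add (f g : G → ℝ) (μ : ℝ≥0[G]) :
    expect (fun x => f x + g x) μ = expect f μ + expect g μ := by
  simp only [expect_eq_sum, mul_add, sum_add_distrib]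

lemma expect_const_mul (c : ℝ) (f : G → ℝ) (μ : ℝ≥0[G]) :
    expect (fun x => c * f x) μ = c * expect f μ := by
  simp only [expect_eq_sum, mul_sum, mul_left_comm]

lemma expect_mono {f g : G → ℝ} (h : ∀ x, f x ≤ g x) (μ : ℝ≥0[G]) : expect f μ ≤ expect g μ :=
  sum_le_sum fun x _ => mul_le_mul_of_nonneg_left (h x) (μ.coeff x).coe_nonneg

variable [AddMonoid G]

lemma expect_const (c : ℝ) (μ : ℝ≥0[G]) : expect (fun _ => c) μ = c * mass μ := by
  rw [expect_eq_sum, ← sum_mul, mass_eq_sum subset_rfl, NNReal.coe_sum, mul_comm]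

lemma expect_mul_single (f : G → ℝ) (μ : ℝ≥0[G]) (y : G) (c : ℝ≥0) :
    expect f (μ * single y c) = c * expect (fun x => f (x + y)) μ := by
  induction μ using AddMonoidAlgebra.induction_linear with
  | zero => simp
  | add μ ν h h' => rw [add_mul, map_add, map_add, h, h', mul_add]
  | single x a =>
    rw [single_mul_single, expect_single, expect_single, NNReal.coe_mul]
    ring

lemma expect_mul (f : G → ℝ) (μ ν : ℝ≥0[G]) :
    expect f (μ * ν) = expect (fun y => expect (fun x => f (x + y)) μ) ν := by
  induction ν using AddMonoidAlgebra.induction_linear with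
  | zero => simp
  | add ν ν' h h' => rw [mul_add, map_add, map_add, h, h']
  | single y c => rw [expect_mul_single, expect_single]

end Expect

lemma expect_sq_mul_coin (μ : ℝ≥0[ℤ]) (s : ℤ) (c : ℝ) :
    expect (fun x : ℤ => ((x : ℝ) - (s / 2 + c)) ^ 2) (μ * coin s) =
      (s : ℝ) ^ 2 / 4 * mass μ + expect (fun x : ℤ => ((x : ℝ) - c) ^ 2) μ := by
  rw [coin, mul_add, map_add, expect_mul_single, expect_mul_single, ← expect_const,
    ← expect_fun_add, ← expect_const_mul, ← expect_const_mul, ← expect_fun_add]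
  congr 2
  funext x
  push_cast
  ring

lemma expect_sq_prod_coin (I : Finset ι) (s : ι → ℤ) :
    expect (fun x : ℤ => ((x : ℝ) - ∑ i ∈ I, (s i : ℝ) / 2) ^ 2) (∏ i ∈ I, coin (s i)) =
      ∑ i ∈ I, (s i : ℝ) ^ 2 / 4 := by
  classical
  induction I using Finset.induction_on with
  | empty =>
    rw [prod_empty, one_def, expect_single]
    simp
  | insert i I hi ih =>
    rw [prod_insert hi, mul_comm, sum_insert hi, sum_insert hi, expect_sq_mul_coin, ih,
      mass_prod_coin]
    simp

lemma expect_sq_mul_le (μ : ℝ≥0[ℤ]) {ρ : ℝ≥0[ℤ]} (hρ : mass ρ = 1) {N : ℝ}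
    (hN : ∀ y ∈ ρ.coeff.support, |(y : ℝ)| ≤ N) (c : ℝ) :
    expect (fun x : ℤ => ((x : ℝ) - c) ^ 2) (μ * ρ) ≤
      2 * expect (fun x : ℤ => ((x : ℝ) - c) ^ 2) μ + 2 * N ^ 2 * mass μ := by
  rw [expect_mul, expect_eq_sum]
  calc ∑ y ∈ ρ.coeff.support,
        (ρ.coeff y : ℝ) * expect (fun x : ℤ => (((x + y : ℤ) : ℝ) - c) ^ 2) μ
      ≤ ∑ y ∈ ρ.coeff.support, (ρ.coeff y : ℝ) *
          (2 * expect (fun x : ℤ => ((x : ℝ) - c) ^ 2) μ + 2 * N ^ 2 * mass μ) := by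
        refine sum_le_sum fun y hy => mul_le_mul_of_nonneg_left ?_ (ρ.coeff y).coe_nonneg
        rw [← expect_const_mul, ← expect_const, ← expect_fun_add]
        refine expect_mono (fun x => ?_) μ
        have hy := sq_le_sq' (neg_le_of_abs_le (hN y hy)) (le_of_abs_le (hN y hy))
        push_cast
        nlinarith [sq_nonneg ((x : ℝ) - c - y)]
    _ = _ := by rw [← sum_mul, sum_coe_coeff subset_rfl hρ, one_mul]

lemma sum_half_pow_natAbs_le (A : Finset ℤ) : ∑ a ∈ A, (1 / 2 : ℝ) ^ a.natAbs ≤ 3 := by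
  have hasSum_natCast : HasSum (fun n : ℕ => (1 / 2 : ℝ) ^ (n : ℤ).natAbs) 2 :=
    hasSum_geometric_two
  have hasSum_neg : HasSum (fun n : ℕ => (1 / 2 : ℝ) ^ (-((n : ℤ) + 1)).natAbs) (2 * (1 / 2)) := by
    have natAbs_neg : ∀ n : ℕ, (-((n : ℤ) + 1)).natAbs = n + 1 := fun n => by omega
    simp only [natAbs_neg, pow_succ]
    exact hasSum_geometric_two.mul_right (1 / 2)
  have hasSum_int : HasSum (fun a : ℤ => (1 / 2 : ℝ) ^ a.natAbs) (2 + 2 * (1 / 2)) :=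
    HasSum.of_nat_of_neg_add_one hasSum_natCast hasSum_neg
  exact (sum_le_hasSum A (fun _ _ => by positivity) hasSum_int).trans_eq (by norm_num)

lemma card_filter_floor_div_eq_le (S : Finset ℤ) {N : ℕ} (hN : 0 < N) (c : ℝ) (a : ℤ) :
    #{x ∈ S | ⌊(((x : ℤ) : ℝ) - c) / N⌋ = a} ≤ N := by
  have hN' : (0 : ℝ) < N := by exact_mod_cast hN
  have subset_Ico : {x ∈ S | ⌊(((x : ℤ) : ℝ) - c) / N⌋ = a} ⊆
      Ico ⌈c + a * N⌉ (⌈c + a * N⌉ + N) := by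
    intro x hx
    have hx := (mem_filter.1 hx).2
    rw [Int.floor_eq_iff, le_div_iff₀ hN', div_lt_iff₀ hN'] at hx
    have hceil := Int.le_ceil (c + a * N)
    refine mem_Ico.2 ⟨Int.ceil_le.2 (by linarith), ?_⟩
    exact_mod_cast (by push_cast; linarith : (x : ℝ) < ((⌈c + a * N⌉ + N : ℤ) : ℝ))
  simpa using card_le_card subset_Ico

lemma sum_half_pow_natAbs_floor_le (S : Finset ℤ) {N : ℕ} (hN : 0 < N) (c : ℝ) :
    ∑ x ∈ S, (1 / 2 : ℝ) ^ ⌊((x : ℝ) - c) / N⌋.natAbs ≤ N * 4 := by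
  set cell : ℤ → ℤ := fun x => ⌊((x : ℝ) - c) / N⌋
  calc ∑ x ∈ S, (1 / 2 : ℝ) ^ (cell x).natAbs
      = ∑ a ∈ S.image cell, ∑ x ∈ S with cell x = a, (1 / 2 : ℝ) ^ (cell x).natAbs :=
        (sum_fiberwise_of_maps_to (fun x hx => mem_image_of_mem cell hx) _).symm
    _ ≤ ∑ a ∈ S.image cell, N * (1 / 2 : ℝ) ^ a.natAbs := by
        refine sum_le_sum fun a _ => ?_
        rw [sum_congr rfl fun x hx => by rw [(mem_filter.1 hx).2], sum_const, nsmul_eq_mul]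
        gcongr
        exact card_filter_floor_div_eq_le S hN c a
    _ ≤ N * 4 := by
        rw [← mul_sum]
        gcongr
        exact (sum_half_pow_natAbs_le _).trans (by norm_num)

lemma natAbs_floor_le_sq_add (y : ℝ) : (⌊y⌋.natAbs : ℝ) ≤ y ^ 2 + 2 := by
  rw [Nat.cast_natAbs, Int.cast_abs, abs_le]
  constructor <;> nlinarith [Int.floor_le y, Int.lt_floor_add_one y, sq_nonneg (y - 1 / 2),
    sq_nonneg (y + 1 / 2)]

-- Compare `μ` with the weights `2 ^ (-|⌊(x - c) / N⌋| - 2) / N` in Gibbs' inequality.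
lemma entropy_le_of_expect_sq_le {μ : ℝ≥0[ℤ]} (hμ : mass μ = 1) {N : ℕ} (hN : 0 < N) {c v : ℝ}
    (hv : expect (fun x : ℤ => ((x : ℝ) - c) ^ 2) μ ≤ v * N ^ 2) :
    entropy μ ≤ log N + v + 4 := by
  have hN' : (0 : ℝ) < N := by exact_mod_cast hN
  set weight : ℤ → ℝ := fun x => (N * 4 : ℝ)⁻¹ * (1 / 2 : ℝ) ^ ⌊((x : ℝ) - c) / N⌋.natAbs
  have sum_weight_le : ∑ x ∈ μ.coeff.support, weight x ≤ 1 := by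
    rw [← mul_sum, inv_mul_le_one₀ (by positivity)]
    exact sum_half_pow_natAbs_floor_le _ hN c
  have neg_log_weight_le : ∀ x : ℤ,
      -log (weight x) ≤ (log N + 4) + ((N : ℝ) ^ 2)⁻¹ * ((x : ℝ) - c) ^ 2 := by
    intro x
    have log_weight : -log (weight x) =
        log N + log 4 + ⌊((x : ℝ) - c) / N⌋.natAbs * log 2 := by
      rw [log_mul (by positivity) (by positivity), log_inv, log_mul hN'.ne' (by norm_num), log_pow,
        one_div, log_inv]
      ring
    have log_four : log 4 = 2 * log 2 := by
      rw [show (4 : ℝ) = 2 ^ 2 by norm_num, log_pow]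
      norm_num
    have sq_div : (((x : ℝ) - c) / N) ^ 2 = ((N : ℝ) ^ 2)⁻¹ * ((x : ℝ) - c) ^ 2 := by
      rw [div_pow, div_eq_inv_mul]
    have floor_le := natAbs_floor_le_sq_add (((x : ℝ) - c) / N)
    have floor_mul_le : ⌊((x : ℝ) - c) / N⌋.natAbs * log 2 ≤ ⌊((x : ℝ) - c) / N⌋.natAbs :=
      mul_le_of_le_one_right (by positivity) (log_two_lt_d9.le.trans (by norm_num))
    linarith [log_two_lt_d9]
  calc entropy μ ≤ expect (fun x => -log (weight x)) μ :=
        gibbs_inequality subset_rfl hμ (fun x _ => by positivity) sum_weight_le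
    _ ≤ expect (fun x : ℤ => (log N + 4) + ((N : ℝ) ^ 2)⁻¹ * ((x : ℝ) - c) ^ 2) μ :=
        expect_mono neg_log_weight_le μ
    _ = (log N + 4) + ((N : ℝ) ^ 2)⁻¹ * expect (fun x : ℤ => ((x : ℝ) - c) ^ 2) μ := by
        rw [expect_fun_add, expect_const, expect_const_mul, hμ, NNReal.coe_one, mul_one]
    _ ≤ (log N + 4) + v := by
        gcongr
        rw [inv_mul_le_iff₀ (by positivity)]
        linarith
    _ = log N + v + 4 := by ring

lemma entropy_prod_coin_mul_blockMeasure_le [Fintype ι] {L q : ℕ}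
    (hι : Fintype.card ι = 2 * 16 ^ L) {s : ι → ℤ} (hs₀ : ∀ j, 0 ≤ s j) (hs : ∀ j, s j ≤ 4 ^ q) :
    entropy ((∏ j, coin (s j)) * blockMeasure (q + L)) ≤ ((q + L : ℕ) : ℝ) * log 4 + 7 := by
  have support_le : ∀ y ∈ (blockMeasure (q + L)).coeff.support, |(y : ℝ)| ≤ (4 : ℝ) ^ (q + L) := by
    intro y hy
    have hy := mem_Ico.1 (support_coeff_uniform_subset _ hy)
    rw [abs_of_nonneg (by exact_mod_cast hy.1)]
    exact_mod_cast hy.2.le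
  have variance_le : ∑ j, (s j : ℝ) ^ 2 / 4 ≤ (4 ^ (q + L)) ^ 2 / 2 := by
    calc ∑ j, (s j : ℝ) ^ 2 / 4 ≤ ∑ _j : ι, ((4 : ℝ) ^ q) ^ 2 / 4 := by
          gcongr with j
          · exact_mod_cast hs₀ j
          · exact_mod_cast hs j
      _ = (4 ^ (q + L)) ^ 2 / 2 := by
          rw [sum_const, card_univ, hι, nsmul_eq_mul, pow_add, mul_pow _ ((4 : ℝ) ^ L),
            ← pow_mul _ L, mul_comm L, pow_mul _ 2]
          push_cast
          ring
  have second_moment_le := expect_sq_mul_le (∏ j, coin (s j)) (mass_blockMeasure (q + L))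
    support_le (∑ j, (s j : ℝ) / 2)
  rw [expect_sq_prod_coin, mass_prod_coin, NNReal.coe_one, mul_one] at second_moment_le
  have h := entropy_le_of_expect_sq_le (N := 4 ^ (q + L)) (v := 3)
    (by simp) (by positivity) (second_moment_le.trans (by push_cast; linarith))
  rw [Nat.cast_pow, log_pow] at h
  norm_num at h ⊢
  linarith

lemma windowEntropy_prod_coin_ge [Fintype ι] {L k r : ℕ} (hι : Fintype.card ι = 2 * 16 ^ L)
    {s : ι → ℤ} (hs : ∀ j, 4 ^ k ≤ s j) (hs' : ∀ j, s j ≤ 4 ^ (k + r)) :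
    (L : ℝ) * log 4 - r * log 4 - 7 ≤ windowEntropy (k + r) L (∏ j, coin (s j)) := by
  have lower := mul_log_four_le_entropy_prod_coin hι r hs
  have upper := entropy_prod_coin_mul_blockMeasure_le hι
    (fun j => le_trans (by positivity) (hs j)) hs'
  rw [windowEntropy_eq, mass_prod_coin]
  push_cast at *
  linarith

end Coins

/-! ### Convolution powers of uniform measures -/

section Powers

lemma le_windowEntropy_pow_sum_coin_mul_single {ι : Type*} {p d M : ℕ} {I : Finset ι} {s : ι → ℤ}
    {B : ℝ} (hB : ∀ i : Fin M → ι, (∀ j, i j ∈ I) → B ≤ windowEntropy p d (∏ j, coin (s (i j))))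
    (x : ι → ℤ) (w : ι → ℝ≥0) :
    ((∑ i ∈ I, w i : ℝ≥0) : ℝ) ^ M * B ≤
      windowEntropy p d ((∑ i ∈ I, coin (s i) * single (x i) (w i)) ^ M) := by
  rw [← NNReal.coe_pow, sum_pow', sum_pow', NNReal.coe_sum, sum_mul]
  refine (sum_le_sum fun i hi => ?_).trans (sum_windowEntropy_le _ _ _ _)
  rw [prod_mul_distrib, prod_single, windowEntropy_mul_single]
  exact mul_le_mul_of_nonneg_left (hB i (Fintype.mem_piFinset.1 hi)) NNReal.zero_le_coe

lemma exists_add_pow_eq {R : Type*} [CommSemiring R] (a b : R) (n : ℕ) :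
    ∃ c, (a + b) ^ n = a * c + b ^ n := by
  induction n with
  | zero => exact ⟨0, by simp⟩
  | succ n ih =>
    obtain ⟨c, hc⟩ := ih
    exact ⟨b ^ n + c * (a + b), by rw [pow_succ, hc]; ring⟩

-- Split `g * M` independent summands into `M` groups of size `g`; each group contains a summand
-- drawn from `μ` with probability at least `1 - (1 - ε) ^ g`.
lemma le_windowEntropy_add_pow {p d M : ℕ} {μ ν : ℝ≥0[ℤ]} {ε B : ℝ} (hB : 0 ≤ B)
    (hmass : mass (μ + ν) = 1) (hε₀ : 0 ≤ ε) (hε : ε ≤ mass μ)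
    (hμ : (mass μ : ℝ) ^ M * B ≤ windowEntropy p d (μ ^ M)) (g : ℕ) :
    (1 - (1 - ε) ^ g) ^ M * B ≤ windowEntropy p d ((μ + ν) ^ (g * M)) := by
  obtain ⟨ρ, hρ⟩ := exists_add_pow_eq μ ν g
  obtain ⟨σ, hσ⟩ := exists_add_pow_eq (ν ^ g) (μ * ρ) M
  have mass_group : (mass μ * mass ρ : ℝ) + (mass ν : ℝ) ^ g = 1 := by
    have h := congrArg mass hρ
    rw [map_pow, hmass, one_pow, map_add, map_mul, map_pow] at h
    exact_mod_cast h.symm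
  have mass_add : (mass μ + mass ν : ℝ) = 1 := by exact_mod_cast (map_add mass μ ν).symm.trans hmass
  have mass_ν_pow_le : (mass ν : ℝ) ^ g ≤ (1 - ε) ^ g :=
    pow_le_pow_left₀ NNReal.zero_le_coe (by linarith) g
  have one_sub_pow_nonneg : 0 ≤ 1 - (1 - ε) ^ g :=
    sub_nonneg.2 (pow_le_one₀ (by linarith [(mass ν).coe_nonneg]) (by linarith))
  calc (1 - (1 - ε) ^ g) ^ M * B ≤ (mass μ * mass ρ : ℝ) ^ M * B := by
        gcongr
        linarith
    _ = mass (ρ ^ M) * ((mass μ : ℝ) ^ M * B) := by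
        rw [map_pow, NNReal.coe_pow]
        ring
    _ ≤ mass (ρ ^ M) * windowEntropy p d (μ ^ M) := by gcongr
    _ ≤ windowEntropy p d (μ ^ M * ρ ^ M) := mass_mul_windowEntropy_le _ _ _ _
    _ ≤ windowEntropy p d ((μ + ν) ^ (g * M)) := by
        rw [pow_mul, hρ, add_comm, hσ, add_comm, ← mul_pow]
        exact windowEntropy_le_windowEntropy_add _ _ _ _

/-- No difference of two elements of `F` lies in `[c, d]`. -/
def AvoidsDifferences (c d : ℤ) (F : Finset ℤ) : Prop :=
  ∀ x ∈ F, ∀ y ∈ F, y - x ∉ Set.Icc c d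

lemma single_add_single_eq_coin_mul_single (x y : ℤ) (a : ℝ≥0) :
    single x a + single y a = coin (y - x) * single x (2 * a) := by
  rw [coin, add_mul, single_mul_single, single_mul_single, zero_add, sub_add_cancel,
    inv_mul_cancel_left₀ two_ne_zero]

lemma exists_avoidsDifferences_and_pairs {c : ℤ} (hc : 0 < c) (d : ℤ) (a : ℝ≥0) (E : Finset ℤ) :
    ∃ F ⊆ E, AvoidsDifferences c d F ∧ ∃ I : Finset (ℤ × ℤ),
      (∀ i ∈ I, i.1 ∈ E ∧ i.2 ∈ Set.Icc c d) ∧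
        ∑ x ∈ E \ F, single x a = ∑ i ∈ I, coin i.2 * single i.1 (2 * a) := by
  induction E using Finset.strongInduction with
  | H E ih =>
    by_cases hE : AvoidsDifferences c d E
    · exact ⟨E, subset_rfl, hE, ∅, by simp, by simp⟩
    simp only [AvoidsDifferences, not_forall, not_not] at hE
    obtain ⟨x, hx, y, hy, hxy⟩ := hE
    have y_ne_x : y ≠ x := by
      rintro rfl
      linarith [hxy.1]
    set E' := (E.erase x).erase y
    have hy' : y ∈ E.erase x := mem_erase.2 ⟨y_ne_x, hy⟩
    have E'_subset : E' ⊆ E := (erase_subset _ _).trans (erase_subset _ _)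
    have x_notMem : x ∉ E' := fun h => notMem_erase x E (mem_of_mem_erase h)
    have y_notMem : y ∉ E' := notMem_erase y _
    obtain ⟨F, hF, hF_avoids, I, hI, sum_eq⟩ :=
      ih E' ((erase_ssubset hy').trans_subset (erase_subset _ _))
    refine ⟨F, hF.trans E'_subset, hF_avoids, insert (x, y - x) I, ?_, ?_⟩
    · intro i hi
      obtain rfl | hi := mem_insert.1 hi
      · exact ⟨hx, hxy⟩
      · exact (hI i hi).imp_left fun h => E'_subset h
    · have sdiff_eq : E \ F = insert x (insert y (E' \ F)) := by
        rw [← insert_erase hx, ← insert_erase hy',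
          insert_sdiff_of_notMem _ fun h => x_notMem (hF h),
          insert_sdiff_of_notMem _ fun h => y_notMem (hF h)]
      rw [sdiff_eq, sum_insert, sum_insert, sum_eq, sum_insert, ← add_assoc,
        single_add_single_eq_coin_mul_single]
      · exact fun h => x_notMem (hI _ h).1
      · exact fun h => y_notMem (mem_sdiff.1 h).1
      · simp only [mem_insert, not_or]
        exact ⟨y_ne_x.symm, fun h => x_notMem (mem_sdiff.1 h).1⟩

-- Pair off points of `E` whose difference lies in `[4 ^ k, 4 ^ (k + r)]` until none are left; if
-- the pairs cover a proportion `ε` of `E`, many of the summands of `uniform E ^ _` are coins.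
lemma exists_avoidsDifferences_le_windowEntropy {E : Finset ℤ} (hE : E.Nonempty) (k r : ℕ) :
    ∃ F ⊆ E, AvoidsDifferences (4 ^ k) (4 ^ (k + r)) F ∧
      ∀ (ε : ℝ) (L g : ℕ), 0 ≤ ε → ε * #E ≤ #(E \ F) → 0 ≤ (L : ℝ) * log 4 - r * log 4 - 7 →
        (1 - (1 - ε) ^ g) ^ (2 * 16 ^ L) * ((L : ℝ) * log 4 - r * log 4 - 7) ≤
          windowEntropy (k + r) L (uniform E ^ (g * (2 * 16 ^ L))) := by
  obtain ⟨F, hF, hF_avoids, I, hI, sum_eq⟩ := exists_avoidsDifferences_and_pairs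
    (by positivity : (0 : ℤ) < 4 ^ k) (4 ^ (k + r)) (#E : ℝ≥0)⁻¹ E
  refine ⟨F, hF, hF_avoids, fun ε L g hε₀ hε hB => ?_⟩
  have uniform_eq : uniform E = (∑ i ∈ I, coin i.2 * single i.1 (2 * (#E : ℝ≥0)⁻¹)) +
      ∑ x ∈ F, single x (#E : ℝ≥0)⁻¹ := by
    rw [← sum_eq, uniform, sum_sdiff hF]
  have coins := le_windowEntropy_pow_sum_coin_mul_single (p := k + r) (d := L) (s := Prod.snd)
    (fun (i : Fin (2 * 16 ^ L) → ℤ × ℤ) hi => windowEntropy_prod_coin_ge (by simp)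
      (fun j => (hI _ (hi j)).2.1) fun j => (hI _ (hi j)).2.2) Prod.fst
    fun _ => 2 * (#E : ℝ≥0)⁻¹
  have mass_coins : mass (∑ i ∈ I, coin i.2 * single i.1 (2 * (#E : ℝ≥0)⁻¹)) =
      ∑ i ∈ I, 2 * (#E : ℝ≥0)⁻¹ := by
    rw [map_sum]
    exact sum_congr rfl fun i _ => by rw [map_mul, mass_coin, one_mul, mass_single]
  have hcard : (0 : ℝ) < #E := by exact_mod_cast hE.card_pos
  have mass_pairs : (mass (∑ x ∈ E \ F, single x (#E : ℝ≥0)⁻¹) : ℝ) = #(E \ F) / #E := by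
    rw [map_sum, sum_congr rfl fun x _ => mass_single x _, sum_const, nsmul_eq_mul, div_eq_mul_inv]
    rfl
  rw [uniform_eq]
  refine le_windowEntropy_add_pow hB (uniform_eq ▸ mass_uniform hE) hε₀ ?_ (mass_coins ▸ coins) g
  rwa [← sum_eq, mass_pairs, le_div_iff₀ hcard]

end Powers

/-! ### A Kraft inequality for sets with gaps -/

section Kraft

lemma sum_prod_ediv_pow_le_one {R : ℤ} (hR : 0 < R) {w : ℕ → ℤ → ℝ} (hw : ∀ b e, 0 ≤ w b e)
    (hw_sum : ∀ b (T : Finset ℤ) d, (∀ e ∈ T, e / R = d) → ∑ e ∈ T, w b e ≤ 1) (B : ℕ) :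
    ∀ (S : Finset ℤ) (d : ℤ), (∀ c ∈ S, c / R ^ B = d) →
      ∑ c ∈ S, ∏ b ∈ range B, w b (c / R ^ b) ≤ 1 := by
  induction B with
  | zero =>
    intro S d hS
    have S_subset : S ⊆ {d} := fun c hc => by simpa using hS c hc
    simpa using card_le_card S_subset
  | succ B ih =>
    intro S d hS
    calc ∑ c ∈ S, ∏ b ∈ range (B + 1), w b (c / R ^ b)
        = ∑ e ∈ S.image (· / R ^ B), ∑ c ∈ S with c / R ^ B = e,
            ∏ b ∈ range (B + 1), w b (c / R ^ b) :=
          (sum_fiberwise_of_maps_to (fun c hc => mem_image_of_mem (· / R ^ B) hc) _).symm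
      _ = ∑ e ∈ S.image (· / R ^ B),
            (∑ c ∈ S with c / R ^ B = e, ∏ b ∈ range B, w b (c / R ^ b)) * w B e := by
          refine sum_congr rfl fun e _ => ?_
          rw [sum_mul]
          refine sum_congr rfl fun c hc => ?_
          rw [prod_range_succ, (mem_filter.1 hc).2]
      _ ≤ ∑ e ∈ S.image (· / R ^ B), w B e :=
          sum_le_sum fun e _ => mul_le_of_le_one_left (hw B e)
            (ih _ e fun c hc => (mem_filter.1 hc).2)
      _ ≤ 1 := by
          refine hw_sum B _ d fun e he => ?_
          obtain ⟨c, hc, rfl⟩ := mem_image.1 he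
          rw [Int.ediv_ediv_of_nonneg (by positivity), ← pow_succ]
          exact hS c hc

lemma card_le_two_of_forall_le_add_one {T : Finset ℤ} (hT : ∀ e ∈ T, ∀ e' ∈ T, e' ≤ e + 1) :
    #T ≤ 2 := by
  obtain rfl | hne := T.eq_empty_or_nonempty
  · simp
  have subset_pair : T ⊆ {T.min' hne, T.min' hne + 1} := by
    intro e he
    have min_le := T.min'_le e he
    have le_succ := hT _ (T.min'_mem hne) e he
    rw [mem_insert, mem_singleton]
    omega
  exact (card_le_card subset_pair).trans card_le_two

/-- A sub-probability weight on each set of `4 ^ r` sibling cells `[e * 4 ^ k, (e + 1) * 4 ^ k)`,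
giving the large weight `1 / 4` to those that meet `F`. -/
noncomputable def cellWeight (F : Finset ℤ) (k r : ℕ) (e : ℤ) : ℝ :=
  if e ∈ F.image (· / 4 ^ k) then 4⁻¹ else (2 * 4 ^ r)⁻¹

lemma cellWeight_pos (F : Finset ℤ) (k r : ℕ) (e : ℤ) : 0 < cellWeight F k r e := by
  rw [cellWeight]
  split_ifs <;> positivity

lemma neg_log_cellWeight_of_mem {F : Finset ℤ} (k r : ℕ) {x : ℤ} (hx : x ∈ F) :
    -log (cellWeight F k r (x / 4 ^ k)) = log 4 := by
  rw [cellWeight, if_pos (mem_image_of_mem (· / 4 ^ k) hx), log_inv, neg_neg]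

lemma neg_log_cellWeight_le (F : Finset ℤ) (k r : ℕ) (e : ℤ) :
    -log (cellWeight F k r e) ≤ log 4 + r * log 4 := by
  have log_two_le : log 2 ≤ log 4 := log_le_log two_pos (by norm_num)
  rw [cellWeight]
  split_ifs
  · rw [log_inv, neg_neg]
    exact le_add_of_nonneg_right (by positivity)
  · rw [log_inv, neg_neg, log_mul two_ne_zero (by positivity), log_pow]
    gcongr

lemma sub_lt_of_ediv_eq {x y c : ℤ} (hc : 0 < c) (h : x / c = y / c) : y - x < c := by
  have hx := Int.emod_add_mul_ediv x c
  have hy := Int.emod_add_mul_ediv y c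
  have hx₀ := Int.emod_nonneg x hc.ne'
  have hyc := Int.emod_lt_of_pos y hc
  rw [h] at hx
  linarith

lemma card_le_of_forall_ediv_eq {T : Finset ℤ} {n : ℕ} (hn : 0 < n) {d : ℤ}
    (hT : ∀ e ∈ T, e / n = d) : #T ≤ n := by
  have hn' : (0 : ℤ) < n := by exact_mod_cast hn
  have subset_Ico : T ⊆ Ico (d * n) (d * n + n) := by
    intro e he
    rw [← hT e he, mem_Ico, ← add_one_mul]
    exact ⟨Int.ediv_mul_le e hn'.ne', Int.lt_ediv_add_one_mul_self e hn'⟩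
  simpa using card_le_card subset_Ico

lemma card_filter_mem_image_ediv_le_two {F : Finset ℤ} {k r : ℕ}
    (hF : AvoidsDifferences (4 ^ k) (4 ^ (k + r)) F) {T : Finset ℤ} {d : ℤ}
    (hT : ∀ e ∈ T, e / 4 ^ r = d) : #{e ∈ T | e ∈ F.image (· / 4 ^ k)} ≤ 2 := by
  have pow_pos : ∀ j, (0 : ℤ) < 4 ^ j := fun j => by positivity
  refine card_le_two_of_forall_le_add_one fun e he e' he' => ?_
  obtain ⟨heT, heF⟩ := mem_filter.1 he
  obtain ⟨heT', heF'⟩ := mem_filter.1 he'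
  obtain ⟨x, hx, rfl⟩ := mem_image.1 heF
  obtain ⟨y, hy, rfl⟩ := mem_image.1 heF'
  have same_parent := (hT _ heT).trans (hT _ heT').symm
  rw [Int.ediv_ediv_of_nonneg (pow_pos k).le, Int.ediv_ediv_of_nonneg (pow_pos k).le,
    ← pow_add] at same_parent
  have sub_lt : y - x < 4 ^ k := by
    by_contra! h
    exact hF x hx y hy ⟨h, (sub_lt_of_ediv_eq (pow_pos _) same_parent).le⟩
  have ediv_le := Int.ediv_le_ediv (pow_pos k) (show y ≤ x + 1 * 4 ^ k by linarith)
  rwa [Int.add_mul_ediv_right _ _ (pow_pos k).ne'] at ediv_le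

lemma sum_cellWeight_le_one {F : Finset ℤ} {k r : ℕ}
    (hF : AvoidsDifferences (4 ^ k) (4 ^ (k + r)) F) {T : Finset ℤ} {d : ℤ}
    (hT : ∀ e ∈ T, e / 4 ^ r = d) : ∑ e ∈ T, cellWeight F k r e ≤ 1 := by
  have card_mem_le : (#{e ∈ T | e ∈ F.image (· / 4 ^ k)} : ℝ) ≤ 2 := by
    exact_mod_cast card_filter_mem_image_ediv_le_two hF hT
  have card_notMem_le : (#{e ∈ T | e ∉ F.image (· / 4 ^ k)} : ℝ) ≤ 4 ^ r := by
    exact_mod_cast (card_filter_le _ _).trans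
      (card_le_of_forall_ediv_eq (n := 4 ^ r) (by positivity) (by exact_mod_cast hT))
  simp only [cellWeight]
  rw [sum_ite, sum_const, sum_const, nsmul_eq_mul, nsmul_eq_mul]
  calc _ ≤ 2 * 4⁻¹ + 4 ^ r * ((2 * 4 ^ r)⁻¹ : ℝ) := by gcongr
    _ = 1 := by
      field_simp
      norm_num

lemma card_mul_log_card_le_sum_neg_log {G : Type*} [AddMonoid G] {E : Finset G} (hE : E.Nonempty)
    {q : G → ℝ} (hq : ∀ x ∈ E, 0 < q x) (hq_sum : ∑ x ∈ E, q x ≤ 1) :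
    (#E : ℝ) * log #E ≤ ∑ x ∈ E, -log (q x) := by
  classical
  have hcard : (0 : ℝ) < #E := by exact_mod_cast hE.card_pos
  have h := gibbs_inequality (support_coeff_uniform_subset E) (mass_uniform hE) hq hq_sum
  rw [entropy_uniform, sum_congr rfl fun x hx => by rw [coeff_uniform_apply, if_pos hx], ← mul_sum,
    NNReal.coe_inv, NNReal.coe_natCast] at h
  rwa [le_inv_mul_iff₀ hcard] at h

lemma card_mul_log_card_le_of_avoidsDifferences {E : Finset ℤ} (hE : E.Nonempty) {p r B : ℕ}
    {F : ℕ → Finset ℤ}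
    (hF : ∀ b, AvoidsDifferences (4 ^ (p + r * b)) (4 ^ (p + r * b + r)) (F b))
    (hFE : ∀ b, F b ⊆ E) (hE_inj : Set.InjOn (· / 4 ^ p) (E : Set ℤ)) {d : ℤ}
    (hE_top : ∀ x ∈ E, x / 4 ^ (p + r * B) = d) :
    (#E : ℝ) * log #E ≤ ∑ b ∈ range B, (#E * log 4 + #(E \ F b) * (r * log 4)) := by
  set w : ℕ → ℤ → ℝ := fun b x => cellWeight (F b) (p + r * b) r (x / 4 ^ (p + r * b))
  have ediv_ediv : ∀ (x : ℤ) (b : ℕ), x / 4 ^ p / (4 ^ r) ^ b = x / 4 ^ (p + r * b) := by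
    intro x b
    rw [Int.ediv_ediv_of_nonneg (by positivity), ← pow_mul, ← pow_add]
  have sum_prod_le : ∑ x ∈ E, ∏ b ∈ range B, w b x ≤ 1 := by
    have h := sum_prod_ediv_pow_le_one (by positivity : (0 : ℤ) < 4 ^ r)
      (fun b e => (cellWeight_pos (F b) (p + r * b) r e).le)
      (fun b _ _ => sum_cellWeight_le_one (hF b)) B (E.image (· / 4 ^ p)) d (by
        simpa only [forall_mem_image, ediv_ediv] using hE_top)
    rw [sum_image hE_inj] at h
    simpa only [ediv_ediv] using h
  have sum_block_le : ∀ b, ∑ x ∈ E, -log (w b x) ≤ #E * log 4 + #(E \ F b) * (r * log 4) := by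
    intro b
    have card_add : ((#(E \ F b) : ℝ) + #(F b)) = #E := by
      exact_mod_cast card_sdiff_add_card_eq_card (hFE b)
    have sum_F : ∑ x ∈ F b, -log (w b x) = #(F b) * log 4 := by
      rw [sum_congr rfl fun x hx => neg_log_cellWeight_of_mem (p + r * b) r hx, sum_const,
        nsmul_eq_mul]
    have sum_sdiff_le : ∑ x ∈ E \ F b, -log (w b x) ≤ #(E \ F b) * (log 4 + r * log 4) := by
      rw [← nsmul_eq_mul]
      exact sum_le_card_nsmul _ _ _ fun x _ => neg_log_cellWeight_le _ _ _ _
    rw [← sum_sdiff (hFE b), sum_F, ← card_add]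
    linarith
  calc (#E : ℝ) * log #E ≤ ∑ x ∈ E, -log (∏ b ∈ range B, w b x) :=
        card_mul_log_card_le_sum_neg_log hE
          (fun x _ => prod_pos fun b _ => cellWeight_pos _ _ _ _) sum_prod_le
    _ = ∑ b ∈ range B, ∑ x ∈ E, -log (w b x) := by
        rw [sum_comm]
        refine sum_congr rfl fun x _ => ?_
        rw [log_prod fun b _ => (cellWeight_pos _ _ _ _).ne', sum_neg_distrib]
    _ ≤ _ := sum_le_sum fun b _ => sum_block_le b

end Kraft

/-! ### Small entropy growth forces small support -/

section InverseTheorem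

lemma windowEntropy_mul_pow_sub_le {μ ρ : ℝ≥0[ℤ]} (hμ : mass μ = 1) (hρ : mass ρ = 1) {p d : ℕ}
    {Γ C : ℝ} (hgrowth : windowEntropy p d (μ * ρ) - windowEntropy p d μ ≤ Γ)
    (htop : entropy (μ * ρ * blockMeasure (p + d)) ≤ (p + d : ℕ) * log 4 + C) (m : ℕ) :
    windowEntropy p d (μ * ρ ^ m) - windowEntropy p d μ ≤ m * (Γ + C) := by
  have entropy_block := natCast_mul_log_four_le_entropy_mul_blockMeasure (p + d) hμ
  have entropy_growth :
      entropy (μ * ρ * blockMeasure p) - entropy (μ * blockMeasure p) ≤ Γ + C := by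
    rw [windowEntropy_eq, windowEntropy_eq, map_mul, hμ, hρ, mul_one] at hgrowth
    linarith
  have entropy_growth_pow :
      entropy (μ * ρ ^ m * blockMeasure p) - entropy (μ * blockMeasure p) ≤ m * (Γ + C) := by
    have h := entropy_mul_pow_sub_le (μ * blockMeasure p) hρ m
    rw [mul_right_comm μ (blockMeasure p), mul_right_comm μ (blockMeasure p)] at h
    exact h.trans (mul_le_mul_of_nonneg_left entropy_growth m.cast_nonneg)
  have entropy_mono := entropy_le_entropy_mul (μ := μ * blockMeasure (p + d)) (ρ := ρ ^ m)
    (by simp [hμ]) (by simp [hρ])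
  rw [mul_right_comm μ] at entropy_mono
  rw [windowEntropy_eq, windowEntropy_eq, map_mul, map_pow, hμ, hρ, one_pow, mul_one]
  linarith

lemma exists_spread_blocks {E : Finset ℤ} (hE : E.Nonempty) {p r B : ℕ} (hr : 0 < r)
    (hE_inj : Set.InjOn (· / 4 ^ p) (E : Set ℤ)) {d : ℤ}
    (hE_top : ∀ x ∈ E, x / 4 ^ (p + r * B) = d) {L : ℕ} (g : ℕ)
    (hL : 0 ≤ (L : ℝ) * log 4 - r * log 4 - 7) :
    ∃ N ⊆ range B, log #E - 2 * B * log 4 ≤ #N * (r * log 4) ∧ ∀ b ∈ N,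
      (1 - (1 - 1 / (r : ℝ)) ^ g) ^ (2 * 16 ^ L) * ((L : ℝ) * log 4 - r * log 4 - 7) ≤
        windowEntropy (p + r * b + r) L (uniform E ^ (g * (2 * 16 ^ L))) := by
  choose F hFE hF hF_entropy using fun b =>
    exists_avoidsDifferences_le_windowEntropy hE (p + r * b) r
  refine ⟨{b ∈ range B | 1 / (r : ℝ) * #E ≤ #(E \ F b)}, filter_subset _ _, ?_, fun b hb =>
    hF_entropy b _ L g (by positivity) (mem_filter.1 hb).2 hL⟩
  have card_pos : (0 : ℝ) < #E := by exact_mod_cast hE.card_pos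
  have : (0 : ℝ) < r := by exact_mod_cast hr
  have log_pos : 0 ≤ log 4 := log_nonneg (by norm_num)
  have block_le : ∀ b ∈ range B, (#E : ℝ) * log 4 + #(E \ F b) * (r * log 4) ≤
      #E * (2 * log 4 + if 1 / (r : ℝ) * #E ≤ #(E \ F b) then r * log 4 else 0) := by
    intro b _
    have sdiff_le : (#(E \ F b) : ℝ) ≤ #E := by exact_mod_cast card_le_card sdiff_subset
    split_ifs with h
    · nlinarith [mul_le_mul_of_nonneg_right sdiff_le (by positivity : 0 ≤ r * log 4),
        mul_nonneg card_pos.le log_pos]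
    · have hlt := mul_le_mul_of_nonneg_right (not_le.1 h).le (by positivity : 0 ≤ r * log 4)
      have : 1 / (r : ℝ) * #E * (r * log 4) = #E * log 4 := by field_simp
      linarith
  have kraft := (card_mul_log_card_le_of_avoidsDifferences hE hF hFE hE_inj hE_top).trans
    (sum_le_sum block_le)
  rw [← mul_sum, sum_add_distrib, ← sum_filter] at kraft
  have := le_of_mul_le_mul_left kraft card_pos
  simp only [sum_const, card_range, nsmul_eq_mul] at this
  linarith

-- Each `l < L` sees distinct positions `r * (b + 1) + l`, so it contributes at most the whole sum.
lemma card_mul_le_sum_of_windows {e : ℕ → ℝ} (he : ∀ h, 0 ≤ e h) {r B L : ℕ} (hr : 0 < r)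
    (hL : 0 < L) {N : Finset ℕ} (hN : ∀ b ∈ N, b + L < B) {c : ℝ}
    (hc : ∀ b ∈ N, L * c ≤ ∑ l ∈ range L, e (r * (b + 1) + l)) :
    #N * c ≤ ∑ h ∈ range (r * B), e h := by
  have residue_le : ∀ l ∈ range L, ∑ b ∈ N, e (r * (b + 1) + l) ≤ ∑ h ∈ range (r * B), e h := by
    intro l hl
    rw [← sum_image (f := e) (g := fun b => r * (b + 1) + l) fun x _ y _ hxy => by
      simpa [hr.ne'] using hxy]
    refine sum_le_sum_of_subset_of_nonneg (fun x hx => ?_) fun h _ _ => he h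
    obtain ⟨b, hb, rfl⟩ := mem_image.1 hx
    have := hN b hb
    rw [mem_range] at hl ⊢
    nlinarith
  have double_count := sum_le_sum hc
  rw [sum_comm] at double_count
  have := double_count.trans (sum_le_sum residue_le)
  simp only [sum_const, nsmul_eq_mul, card_range] at this
  exact le_of_mul_le_mul_left (by linarith) (by exact_mod_cast hL : (0 : ℝ) < L)

lemma windowEntropy_le_add_gain {ν ρ : ℝ≥0[ℤ]} (hν : mass ν = 1) {p L : ℕ} {c : ℝ}
    (hc : ∀ l < L, scaleEntropy (p + l) ν ≤ c) :
    windowEntropy p L ρ ≤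
      L * c + ∑ l ∈ range L, (scaleEntropy (p + l) (ν * ρ) - scaleEntropy (p + l) ν) := by
  have sum_c : ∑ _l ∈ range L, c = L * c := by simp
  rw [← sum_c, ← sum_add_distrib]
  refine sum_le_sum fun l hl => ?_
  have h := mass_mul_scaleEntropy_le (p + l) ρ ν
  rw [hν, NNReal.coe_one, one_mul, mul_comm] at h
  linarith [hc l (mem_range.1 hl)]

lemma card_le_card_filter_add_lt {N : Finset ℕ} {B : ℕ} (hN : N ⊆ range B) (L : ℕ) :
    #N ≤ #{b ∈ N | b + L < B} + L := by
  have : N ⊆ {b ∈ N | b + L < B} ∪ Ico (B - L) B := by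
    intro b hb
    have := mem_range.1 (hN hb)
    simp only [mem_union, mem_filter, mem_Ico, hb, true_and]
    omega
  have := (card_le_card this).trans (card_union_le _ _)
  rw [Nat.card_Ico] at this
  omega

lemma log_card_mul_le_of_single_cell {E : Finset ℤ} (hE : E.Nonempty) {ν : ℝ≥0[ℤ]}
    (hν : mass ν = 1) {p r B : ℕ} (hr : 0 < r) (hE_inj : Set.InjOn (· / 4 ^ p) (E : Set ℤ)) {d : ℤ}
    (hE_top : ∀ x ∈ E, x / 4 ^ (p + r * B) = d) {L g : ℕ} (hL_pos : 0 < L) {s' s'' Δ : ℝ}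
    (hs : s' < s'') (hL : 0 ≤ (L : ℝ) * log 4 - r * log 4 - 7)
    (hLg : (L : ℝ) * (s'' * log 4) ≤
      (1 - (1 - 1 / (r : ℝ)) ^ g) ^ (2 * 16 ^ L) * ((L : ℝ) * log 4 - r * log 4 - 7))
    (hν_le : ∀ h < r * B, scaleEntropy (p + h) ν ≤ s' * log 4)
    (hgrowth : windowEntropy p (r * B) (ν * uniform E ^ (g * (2 * 16 ^ L))) -
      windowEntropy p (r * B) ν ≤ Δ) :
    (log #E - 2 * B * log 4 - r * L * log 4) * (s'' - s') ≤ r * Δ := by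
  obtain ⟨N, hNB, hN_card, hN⟩ := exists_spread_blocks hE hr hE_inj hE_top g hL
  set ρ := uniform E ^ (g * (2 * 16 ^ L))
  set N' := {b ∈ N | b + L < B}
  set gain : ℕ → ℝ := fun h => scaleEntropy (p + h) (ν * ρ) - scaleEntropy (p + h) ν
  have gain_nonneg : ∀ h, 0 ≤ gain h := fun h => by
    have := mass_mul_scaleEntropy_le (p + h) ν ρ
    rw [map_pow, mass_uniform hE, one_pow, NNReal.coe_one, one_mul] at this
    exact sub_nonneg.2 this
  have gain_block : ∀ b ∈ N', L * ((s'' - s') * log 4) ≤ ∑ l ∈ range L, gain (r * (b + 1) + l) := by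
    intro b hb
    obtain ⟨hbN, hbL⟩ := mem_filter.1 hb
    have h := windowEntropy_le_add_gain (ρ := ρ) (p := p + r * b + r) (L := L) hν fun l hl => by
      rw [add_assoc, add_assoc]
      exact hν_le _ (by nlinarith)
    have gain_eq : ∀ l, scaleEntropy (p + r * b + r + l) (ν * ρ) -
        scaleEntropy (p + r * b + r + l) ν = gain (r * (b + 1) + l) := fun l => by
      simp only [gain, mul_add_one, add_assoc]
    simp only [gain_eq] at h
    linarith [hN b hbN]
  have total_gain := card_mul_le_sum_of_windows gain_nonneg hr hL_pos
    (fun b hb => (mem_filter.1 hb).2) gain_block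
  rw [sum_sub_distrib] at total_gain
  have card_N' : (#N : ℝ) ≤ #N' + L := by exact_mod_cast card_le_card_filter_add_lt hNB L
  have r_log_nonneg : 0 ≤ r * log 4 := by positivity
  calc (log #E - 2 * B * log 4 - r * L * log 4) * (s'' - s')
      ≤ #N' * (r * log 4) * (s'' - s') := by
        refine mul_le_mul_of_nonneg_right ?_ (sub_nonneg.2 hs.le)
        linarith [mul_le_mul_of_nonneg_right card_N' r_log_nonneg]
    _ = r * (#N' * ((s'' - s') * log 4)) := by ring
    _ ≤ r * Δ := mul_le_mul_of_nonneg_left (total_gain.trans hgrowth) r.cast_nonneg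

lemma uniform_eq_sum_fiber {κ : Type*} [DecidableEq κ] (f : ℤ → κ) (S : Finset ℤ) :
    uniform S = ∑ θ ∈ S.image f,
      uniform {x ∈ S | f x = θ} * single 0 ((#{x ∈ S | f x = θ} : ℝ≥0) / #S) := by
  rw [uniform, ← sum_fiberwise_of_maps_to (g := f) fun x hx => mem_image_of_mem f hx]
  refine sum_congr rfl fun θ _ => ?_
  rw [uniform, sum_mul]
  refine sum_congr rfl fun x hx => ?_
  have : (#{x ∈ S | f x = θ} : ℝ≥0) ≠ 0 := by exact_mod_cast (card_pos.2 ⟨x, hx⟩).ne'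
  rw [single_mul_single, add_zero, inv_mul_eq_div, div_div_cancel_left' this]

lemma exists_le_two_mul_of_sum_mul_le {ι : Type*} {I : Finset ι} {w f : ι → ℝ}
    (hw : ∀ i ∈ I, 0 < w i) (hw_sum : ∑ i ∈ I, w i = 1) (hf : ∀ i ∈ I, 0 ≤ f i) {Γ : ℝ}
    (hΓ : 0 < Γ) (h : ∑ i ∈ I, w i * f i ≤ Γ) :
    ∃ i ∈ I, f i ≤ 2 * Γ ∧ 1 ≤ 2 * #I * w i := by
  have hI : I.Nonempty := nonempty_of_sum_ne_zero (hw_sum.trans_ne one_ne_zero)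
  have : (0 : ℝ) < #I := by exact_mod_cast hI.card_pos
  have sum_le : ∑ i ∈ I, (w i * f i / (2 * Γ) + 1 / (2 * #I)) ≤ ∑ i ∈ I, w i := by
    rw [sum_add_distrib, ← sum_div, sum_const, nsmul_eq_mul, hw_sum]
    have : (#I : ℝ) * (1 / (2 * #I)) = 1 / 2 := by field_simp
    have : (∑ i ∈ I, w i * f i) / (2 * Γ) ≤ 1 / 2 := by
      rw [div_le_iff₀ (by positivity)]
      linarith
    linarith
  obtain ⟨i, hi, hle⟩ := exists_le_of_sum_le hI sum_le
  have hfi := hf i hi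
  have hwi := hw i hi
  refine ⟨i, hi, ?_, ?_⟩
  · have : w i * f i / (2 * Γ) ≤ w i := (le_add_of_nonneg_right (by positivity)).trans hle
    rw [div_le_iff₀ (by positivity)] at this
    exact le_of_mul_le_mul_left this hwi
  · have : 1 / (2 * (#I : ℝ)) ≤ w i := (le_add_of_nonneg_left (by positivity)).trans hle
    rwa [div_le_iff₀' (by positivity)] at this

lemma exists_fiber_windowEntropy_mul_sub_le {κ : Type*} [DecidableEq κ] (f : ℤ → κ) {ν : ℝ≥0[ℤ]}
    {S : Finset ℤ} (hS : S.Nonempty) {p d : ℕ} {Γ : ℝ} (hΓ : 0 < Γ)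
    (hgrowth : windowEntropy p d (ν * uniform S) - windowEntropy p d ν ≤ Γ) :
    ∃ θ, {x ∈ S | f x = θ}.Nonempty ∧
      windowEntropy p d (ν * uniform {x ∈ S | f x = θ}) - windowEntropy p d ν ≤ 2 * Γ ∧
      #S ≤ 2 * #(S.image f) * #{x ∈ S | f x = θ} := by
  set fiber : κ → Finset ℤ := fun θ => {x ∈ S | f x = θ}
  have card_pos : (0 : ℝ) < #S := by exact_mod_cast hS.card_pos
  have fiber_nonempty : ∀ θ ∈ S.image f, (fiber θ).Nonempty := fun θ hθ => by
    obtain ⟨x, hx, rfl⟩ := mem_image.1 hθ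
    exact ⟨x, mem_filter.2 ⟨hx, rfl⟩⟩
  have weight_sum : ∑ θ ∈ S.image f, (#(fiber θ) : ℝ) / #S = 1 := by
    rw [← sum_div, ← Nat.cast_sum, ← card_eq_sum_card_image, div_self card_pos.ne']
  have average_le : ∑ θ ∈ S.image f, (#(fiber θ) : ℝ) / #S *
      (windowEntropy p d (ν * uniform (fiber θ)) - windowEntropy p d ν) ≤ Γ := by
    have h := sum_windowEntropy_le p d (S.image f) fun θ =>
      ν * uniform (fiber θ) * single 0 ((#(fiber θ) : ℝ≥0) / #S)
    simp only [mul_assoc] at h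
    rw [← mul_sum, ← uniform_eq_sum_fiber] at h
    simp only [← mul_assoc, windowEntropy_mul_single] at h
    push_cast at h
    simp only [mul_sub, sum_sub_distrib, ← sum_mul, weight_sum, one_mul]
    linarith
  have gain_nonneg : ∀ θ ∈ S.image f,
      0 ≤ windowEntropy p d (ν * uniform (fiber θ)) - windowEntropy p d ν := fun θ hθ => by
    have := mass_mul_windowEntropy_le p d ν (uniform (fiber θ))
    rw [mass_uniform (fiber_nonempty θ hθ), NNReal.coe_one, one_mul] at this
    exact sub_nonneg.2 this
  obtain ⟨θ, hθ, hgain, hweight⟩ := exists_le_two_mul_of_sum_mul_le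
    (fun θ hθ => div_pos (by exact_mod_cast (fiber_nonempty θ hθ).card_pos) card_pos)
    weight_sum gain_nonneg hΓ average_le
  refine ⟨θ, fiber_nonempty θ hθ, hgain, ?_⟩
  rw [← mul_div_assoc, le_div_iff₀ card_pos, one_mul] at hweight
  exact_mod_cast hweight

lemma entropy_mul_uniform_mul_blockMeasure_le {ν : ℝ≥0[ℤ]} (hν : mass ν = 1) {E : Finset ℤ}
    (hE : E.Nonempty) {q : ℕ} {θ : ℤ} (hν_supp : ν.coeff.support ⊆ Ico 0 (4 ^ q))
    (hEθ : ∀ x ∈ E, x / 4 ^ q = θ) :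
    entropy (ν * uniform E * blockMeasure q) ≤ q * log 4 + log 4 := by
  have support_subset : (ν * uniform E * blockMeasure q).coeff.support ⊆
      Ico (4 ^ q * θ) (4 ^ q * θ + 4 ^ (q + 1)) := by
    intro z hz
    obtain ⟨x, hx, y, hy, rfl⟩ := mem_support_coeff_mul hz
    obtain ⟨u, hu, v, hv, rfl⟩ := mem_support_coeff_mul hx
    have hu := mem_Ico.1 (hν_supp hu)
    have hy := mem_Ico.1 (support_coeff_uniform_subset _ hy)
    have hv := hEθ v (support_coeff_uniform_subset _ hv)
    have hv_eq := Int.emod_add_mul_ediv v (4 ^ q)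
    have hv_nonneg := Int.emod_nonneg v (by positivity : (4 : ℤ) ^ q ≠ 0)
    have hv_lt := Int.emod_lt_of_pos v (by positivity : (0 : ℤ) < 4 ^ q)
    rw [hv] at hv_eq
    rw [mem_Ico, pow_succ]
    constructor <;> linarith
  have card_eq : #(Ico (4 ^ q * θ) (4 ^ q * θ + 4 ^ (q + 1))) = 4 ^ (q + 1) := by
    rw [Int.card_Ico, add_sub_cancel_left]
    exact_mod_cast Int.toNat_natCast (4 ^ (q + 1))
  refine (entropy_le_log_card support_subset (by simp [hν, mass_uniform hE])).trans_eq ?_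
  rw [card_eq]
  push_cast
  rw [log_pow]
  push_cast
  ring

lemma log_card_mul_le_of_windowEntropy_mul_sub_le {S : Finset ℤ} (hS : S.Nonempty) {ν : ℝ≥0[ℤ]}
    (hν : mass ν = 1) {p r B : ℕ} (hr : 0 < r) (hS_inj : Set.InjOn (· / 4 ^ p) (S : Set ℤ))
    (hν_supp : ν.coeff.support ⊆ Ico 0 (4 ^ (p + r * B))) {L g : ℕ} (hL_pos : 0 < L)
    {s' s'' Γ : ℝ} (hs : s' < s'') (hΓ : 0 < Γ) (hL : 0 ≤ (L : ℝ) * log 4 - r * log 4 - 7)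
    (hLg : (L : ℝ) * (s'' * log 4) ≤
      (1 - (1 - 1 / (r : ℝ)) ^ g) ^ (2 * 16 ^ L) * ((L : ℝ) * log 4 - r * log 4 - 7))
    (hν_le : ∀ h < r * B, scaleEntropy (p + h) ν ≤ s' * log 4)
    (hgrowth : windowEntropy p (r * B) (ν * uniform S) - windowEntropy p (r * B) ν ≤ Γ) :
    (log #S - log (2 * #(S.image (· / 4 ^ (p + r * B)))) - 2 * B * log 4 - r * L * log 4) *
      (s'' - s') ≤ r * ((g * (2 * 16 ^ L) : ℕ) * (2 * Γ + log 4)) := by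
  obtain ⟨θ, hE, hE_growth, hE_card⟩ :=
    exists_fiber_windowEntropy_mul_sub_le (· / 4 ^ (p + r * B)) hS hΓ hgrowth
  set E := {x ∈ S | x / 4 ^ (p + r * B) = θ}
  have hEθ : ∀ x ∈ E, x / 4 ^ (p + r * B) = θ := fun x hx => (mem_filter.1 hx).2
  have pow_growth := windowEntropy_mul_pow_sub_le hν (mass_uniform hE) hE_growth
    (entropy_mul_uniform_mul_blockMeasure_le hν hE hν_supp hEθ) (g * (2 * 16 ^ L))
  refine le_trans ?_ (log_card_mul_le_of_single_cell hE hν hr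
    (hS_inj.mono (coe_subset.2 (filter_subset _ _))) hEθ hL_pos hs hL hLg hν_le pow_growth)
  have card_pos : (0 : ℝ) < #S := by exact_mod_cast hS.card_pos
  have cells_pos : (0 : ℝ) < #(S.image (· / 4 ^ (p + r * B))) := by
    exact_mod_cast (hS.image _).card_pos
  have log_le : log #S ≤ log (2 * #(S.image (· / 4 ^ (p + r * B)))) + log #E := by
    rw [← log_mul (by positivity) (by exact_mod_cast hE.card_pos.ne')]
    exact log_le_log card_pos (by exact_mod_cast hE_card)
  gcongr
  linarith

lemma exists_block_length_and_gain {s : ℝ} (hs₀ : 0 ≤ s) (hs₁ : s < 1) {r : ℕ} (hr : 0 < r) :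
    ∃ L : ℕ, 0 < L ∧ ∃ g : ℕ, 0 ≤ (L : ℝ) * log 4 - r * log 4 - 7 ∧ (L : ℝ) * (s * log 4) ≤
      (1 - (1 - 1 / (r : ℝ)) ^ g) ^ (2 * 16 ^ L) * ((L : ℝ) * log 4 - r * log 4 - 7) := by
  have : 0 < 1 - s := sub_pos.2 hs₁
  obtain ⟨L, hL⟩ := exists_nat_gt ((r * log 4 + 7) / ((1 - s) * log 4))
  have L_pos : (0 : ℝ) < L := lt_trans (by positivity) hL
  rw [div_lt_iff₀ (by positivity)] at hL
  have lt_gain : L * (s * log 4) < L * log 4 - r * log 4 - 7 := by linarith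
  have pow_tendsto : Tendsto (fun g : ℕ => (1 - 1 / (r : ℝ)) ^ g) atTop (𝓝 0) := by
    refine tendsto_pow_atTop_nhds_zero_of_lt_one ?_ (sub_lt_self _ (by positivity))
    exact sub_nonneg.2 (div_le_one_of_le₀ (by exact_mod_cast hr) r.cast_nonneg)
  have gain_tendsto := ((pow_tendsto.const_sub 1).pow (2 * 16 ^ L)).mul_const
    (L * log 4 - r * log 4 - 7)
  rw [sub_zero, one_pow, one_mul] at gain_tendsto
  obtain ⟨g, hg⟩ := (gain_tendsto.eventually (lt_mem_nhds lt_gain)).exists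
  exact ⟨L, Nat.cast_pos.1 L_pos, g, (by positivity : 0 ≤ L * (s * log 4)).trans lt_gain.le, hg.le⟩

-- A quantitative form of Hochman's inverse theorem for the entropy of convolutions.
lemma exists_log_card_le_of_windowEntropy_mul_sub_le {s : ℝ} (hs₀ : 0 ≤ s) (hs₁ : s < 1) {r : ℕ}
    (hr : 0 < r) :
    ∃ κ > 0, ∃ C, ∀ {S : Finset ℤ} {ν : ℝ≥0[ℤ]} {p B : ℕ} {Γ : ℝ}, S.Nonempty → mass ν = 1 →
      Set.InjOn (· / 4 ^ p) (S : Set ℤ) → ν.coeff.support ⊆ Ico 0 (4 ^ (p + r * B)) →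
      (∀ h < r * B, scaleEntropy (p + h) ν ≤ s * log 4) → 0 < Γ →
      windowEntropy p (r * B) (ν * uniform S) - windowEntropy p (r * B) ν ≤ Γ →
      log #S ≤ log (2 * #(S.image (· / 4 ^ (p + r * B)))) + 2 * B * log 4 + C + κ * Γ := by
  obtain ⟨s', hs', hs'₁⟩ := exists_between hs₁
  obtain ⟨L, L_pos, g, hL, hLg⟩ := exists_block_length_and_gain (hs₀.trans hs'.le) hs'₁ hr
  have gap_pos : 0 < s' - s := sub_pos.2 hs'
  set m : ℝ := ((g * (2 * 16 ^ L) : ℕ) : ℝ)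
  refine ⟨r * (m * 2) / (s' - s) + 1, by positivity, r * L * log 4 + r * (m * log 4) / (s' - s), ?_⟩
  intro S ν p B Γ hS hν hS_inj hν_supp hν_le hΓ hgrowth
  have h := log_card_mul_le_of_windowEntropy_mul_sub_le hS hν hr hS_inj hν_supp L_pos hs' hΓ hL hLg
    hν_le hgrowth
  rw [← le_div_iff₀ gap_pos] at h
  have split : r * (m * (2 * Γ + log 4)) / (s' - s) =
      r * (m * 2) / (s' - s) * Γ + r * (m * log 4) / (s' - s) := by ring
  linarith

end InverseTheorem

/-! ### Scales at which a self-similar measure gains little entropy -/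

section MonotoneArrays

lemma exists_increment_le {f : ℕ → ℝ} {M : ℝ} (hf : ∀ j, f j ∈ Set.Icc 0 M) {R : ℕ} (hR : 0 < R) :
    ∃ j < R, f (j + 1) - f j ≤ M / R := by
  have sum_le : ∑ j ∈ range R, (f (j + 1) - f j) ≤ ∑ _j ∈ range R, M / R := by
    rw [sum_range_sub, sum_const, card_range, nsmul_eq_mul, mul_div_cancel₀ _ (by positivity)]
    linarith [(hf R).2, (hf 0).1]
  obtain ⟨j, hj, hle⟩ := exists_le_of_sum_le (nonempty_range_iff.2 hR.ne') sum_le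
  exact ⟨j, mem_range.1 hj, hle⟩

lemma exists_lacunary_seq {p : ℕ → Prop} (hp : ∃ᶠ n in atTop, p n) (n₀ R : ℕ) :
    ∃ u : ℕ → ℕ, ∀ j, n₀ ≤ u j ∧ p (u j) ∧ R * u j ≤ u (j + 1) := by
  choose next next_ge hnext using frequently_atTop.1 hp
  refine ⟨fun j => Nat.rec (next n₀) (fun _ m => next (n₀ + R * m)) j, fun j => ⟨?_, ?_, ?_⟩⟩
  · cases j with
    | zero => exact next_ge _
    | succ j => exact (Nat.le_add_right _ _).trans (next_ge _)
  · cases j <;> exact hnext _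
  · exact (Nat.le_add_left _ _).trans (next_ge _)

lemma exists_forall_ciSup_sub_le {c : ℕ → ℕ → ℝ} (hc : ∀ i, Monotone (c i))
    (hbdd : ∀ i, BddAbove (Set.range (c i))) (D : ℕ) {τ : ℝ} (hτ : 0 < τ) :
    ∃ P, ∀ i ≤ D, (⨆ Q, c i Q) - τ ≤ c i P := by
  have eventually_close : ∀ᶠ P in atTop, ∀ i ∈ range (D + 1), (⨆ Q, c i Q) - τ ≤ c i P :=
    (eventually_all_finset _).2 fun i _ => ((tendsto_atTop_ciSup (hc i) (hbdd i)).eventually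
      (lt_mem_nhds (sub_lt_self _ hτ))).mono fun _ => le_of_lt
  obtain ⟨P, hP⟩ := eventually_close.exists
  exact ⟨P, fun i hi => hP i (mem_range_succ_iff.2 hi)⟩

variable {M : ℝ}

lemma exists_sum_increments_le {c : ℕ → ℕ → ℝ} (hc : ∀ i, Monotone (c i))
    (hc' : Monotone c) (hM : ∀ i P, c i P ∈ Set.Icc 0 M) {D n m q : ℕ} (hmq : m ≤ q)
    (hq : D + n ≤ q) {τ : ℝ} (hτ : 0 < τ) :
    ∃ P, ∑ i ∈ range D, (c (i + 1 + n) (P + (D - 1 - i)) - c (i + 1) (P + (D - 1 - i))) ≤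
      m * M + D * ((⨆ P, c q P) - (⨆ P, c m P) + τ) := by
  have hbdd : ∀ i, BddAbove (Set.range (c i)) := fun i =>
    ⟨M, Set.forall_mem_range.2 fun P => (hM i P).2⟩
  have sup_mono : Monotone fun i => ⨆ P, c i P := fun i j h => ciSup_mono (hbdd j) (hc' h)
  obtain ⟨P, hP⟩ := exists_forall_ciSup_sub_le hc hbdd D hτ
  have M_nonneg : 0 ≤ M := (hM 0 0).1.trans (hM 0 0).2
  have increment_le : ∀ i ∈ range D,
      c (i + 1 + n) (P + (D - 1 - i)) - c (i + 1) (P + (D - 1 - i)) ≤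
        (if i < m then M else 0) + ((⨆ P, c q P) - (⨆ P, c m P) + τ) := by
    intro i hi
    rw [mem_range] at hi
    split_ifs with him
    · linarith [(hM (i + 1 + n) (P + (D - 1 - i))).2, (hM (i + 1) (P + (D - 1 - i))).1,
        sup_mono hmq]
    · linarith [le_ciSup (hbdd (i + 1 + n)) (P + (D - 1 - i)), hP (i + 1) hi,
        hc (i + 1) (Nat.le_add_right P (D - 1 - i)), sup_mono (show i + 1 + n ≤ q by omega),
        sup_mono (show m ≤ i + 1 by omega)]
  refine ⟨P, (sum_le_sum increment_le).trans ?_⟩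
  rw [sum_add_distrib, sum_const, card_range, nsmul_eq_mul, ← sum_filter, sum_const, nsmul_eq_mul]
  have card_le : #{i ∈ range D | i < m} ≤ m :=
    (card_le_card fun i hi => mem_range.2 (mem_filter.1 hi).2).trans_eq (card_range m)
  gcongr

-- Along a sequence `u` that grows by the factor `R` at each step, the suprema `⨆ P, c K i P` at
-- `i = (A + 1) * u j` are increasing and bounded, hence nearly constant from some `j` to `j + 1`.
lemma exists_sum_increments_le_mul {c : ℕ → ℕ → ℕ → ℝ} (hc : ∀ K i, Monotone (c K i))
    (hc' : ∀ K, Monotone (c K)) (hM : ∀ K i P, c K i P ∈ Set.Icc 0 M) {p : ℕ → Prop}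
    (hp : ∃ᶠ n in atTop, p n) {D : ℕ → ℕ} {A n₀ : ℕ} (hD : ∀ n ≥ n₀, D n ≤ A * n) (K₀ : ℕ → ℕ)
    {δ : ℝ} (hδ : 0 < δ) :
    ∃ n ≥ n₀, p n ∧ ∃ K ≥ K₀ n, ∃ P, ∑ i ∈ range (D n),
      (c K (i + 1 + n) (P + (D n - 1 - i)) - c K (i + 1) (P + (D n - 1 - i))) ≤ δ * n := by
  have M_nonneg : 0 ≤ M := (hM 0 0 0).1.trans (hM 0 0 0).2
  obtain ⟨R, hR⟩ := exists_nat_gt (3 * (A + 1) * M / δ)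
  have R_pos : (0 : ℝ) < R := lt_of_le_of_lt (by positivity) hR
  rw [div_lt_iff₀ hδ] at hR
  obtain ⟨u, hu⟩ := exists_lacunary_seq hp n₀ R
  set K := (range (R + 1)).sup (K₀ ∘ u)
  have sup_mem : ∀ i, (⨆ P, c K i P) ∈ Set.Icc 0 M := fun i =>
    ⟨Real.iSup_nonneg fun P => (hM K i P).1, ciSup_le fun P => (hM K i P).2⟩
  obtain ⟨j, hjR, hj⟩ := exists_increment_le (f := fun j => ⨆ P, c K ((A + 1) * u j) P)
    (fun j => sup_mem _) (Nat.cast_pos.1 R_pos)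
  set n := u (j + 1)
  have u_le : u j ≤ n := (Nat.le_mul_of_pos_left _ (Nat.cast_pos.1 R_pos)).trans (hu j).2.2
  have n_le : R * (u j : ℝ) ≤ n := by exact_mod_cast (hu j).2.2
  have D_le : (D n : ℝ) ≤ A * n := by exact_mod_cast hD n (hu _).1
  obtain ⟨P, hP⟩ := exists_sum_increments_le (hc K) (hc' K) (hM K)
    (D := D n) (n := n) (m := (A + 1) * u j) (q := (A + 1) * n)
    (Nat.mul_le_mul_left _ u_le) (by linarith [hD n (hu _).1])
    (τ := δ / (3 * (A + 1))) (by positivity)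
  refine ⟨n, (hu _).1, (hu _).2.1, K, le_sup (f := K₀ ∘ u) (mem_range.2 (by omega)), P,
    hP.trans ?_⟩
  have initial_le : ((A + 1) * u j : ℕ) * M ≤ δ / 3 * n := by
    have := mul_le_mul_of_nonneg_right hR.le (u j).cast_nonneg
    have := mul_le_mul_of_nonneg_left n_le hδ.le
    push_cast
    linarith
  have error_le : (D n : ℝ) * (δ / (3 * (A + 1))) ≤ δ / 3 * n :=
    calc (D n : ℝ) * (δ / (3 * (A + 1))) ≤ (A + 1) * n * (δ / (3 * (A + 1))) := by
          gcongr
          linarith [n.cast_nonneg (α := ℝ)]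
      _ = δ / 3 * n := by field_simp
  have increment_le : (D n : ℝ) * (M / R) ≤ δ / 3 * n := by
    have M_div_le : M / R ≤ δ / (3 * (A + 1)) := by
      rw [div_le_div_iff₀ R_pos (by positivity)]
      linarith
    exact (mul_le_mul_of_nonneg_left M_div_le (D n).cast_nonneg).trans error_le
  linarith [mul_le_mul_of_nonneg_left hj (D n).cast_nonneg]

end MonotoneArrays

section SelfSimilar

variable {lam : ℝ≥0[ℤ]}

lemma dilate_dilate (m n : ℤ) (μ : ℝ≥0[ℤ]) : dilate m (dilate n μ) = dilate (m * n) μ := by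
  induction μ using AddMonoidAlgebra.induction_linear with
  | zero => simp
  | add μ ν hμ hν => rw [map_add, map_add, map_add, hμ, hν]
  | single y c => rw [dilate_single, dilate_single, dilate_single, mul_assoc]

@[simp] lemma dilate_one (μ : ℝ≥0[ℤ]) : dilate 1 μ = μ := by
  induction μ using AddMonoidAlgebra.induction_linear with
  | zero => simp
  | add μ ν hμ hν => rw [map_add, hμ, hν]
  | single y c => rw [dilate_single, one_mul]

/-- The law of `∑ j < P, 4 ^ j * X j` for independent random integers `X j` of law `lam`; scaled
down by `4 ^ P` it approximates a self-similar measure of contraction ratio `1 / 4`. -/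
noncomputable def selfSimilar (lam : ℝ≥0[ℤ]) (P : ℕ) : ℝ≥0[ℤ] :=
  ∏ j ∈ range P, dilate (4 ^ j) lam

lemma mass_selfSimilar (hlam : mass lam = 1) (P : ℕ) : mass (selfSimilar lam P) = 1 := by
  simp [selfSimilar, hlam]

lemma selfSimilar_add (lam : ℝ≥0[ℤ]) (P n : ℕ) :
    selfSimilar lam (P + n) = selfSimilar lam P * dilate (4 ^ P) (selfSimilar lam n) := by
  simp only [selfSimilar, prod_range_add, map_prod, dilate_dilate, pow_add]

lemma selfSimilar_succ (lam : ℝ≥0[ℤ]) (P : ℕ) :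
    selfSimilar lam (P + 1) = dilate 4 (selfSimilar lam P) * lam := by
  simp only [selfSimilar, prod_range_succ', map_prod, dilate_dilate, ← pow_succ', pow_zero]
  rw [dilate_one]

lemma monotone_scaleEntropy_selfSimilar (hlam : mass lam = 1) (k : ℕ) :
    Monotone fun P => scaleEntropy k (selfSimilar lam P) := by
  intro P Q hPQ
  obtain ⟨n, rfl⟩ := Nat.exists_eq_add_of_le hPQ
  have := mass_mul_scaleEntropy_le k (selfSimilar lam P) (dilate (4 ^ P) (selfSimilar lam n))
  simpa [mass_selfSimilar hlam, selfSimilar_add] using this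

lemma monotone_scaleEntropy_selfSimilar_diagonal (hlam : mass lam = 1) (k i : ℕ) :
    Monotone fun P => scaleEntropy (k + P) (selfSimilar lam (P + i)) := by
  refine monotone_nat_of_le_succ fun P => ?_
  have := mass_mul_scaleEntropy_le (k + P + 1) (dilate 4 (selfSimilar lam (P + i))) lam
  rwa [hlam, NNReal.coe_one, one_mul, scaleEntropy_dilate, ← selfSimilar_succ, add_assoc k,
    add_right_comm P] at this

lemma exists_windowEntropy_selfSimilar_sub_le {lam : ℕ → ℝ≥0[ℤ]} (hlam : ∀ K, mass (lam K) = 1)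
    {p : ℕ → Prop} (hp : ∃ᶠ n in atTop, p n) {D : ℕ → ℕ} {A n₀ : ℕ}
    (hD : ∀ n ≥ n₀, D n ≤ A * n) (K₀ : ℕ → ℕ) {δ : ℝ} (hδ : 0 < δ) :
    ∃ n ≥ n₀, p n ∧ ∃ K ≥ K₀ n, ∃ P,
      windowEntropy (K + P) (D n) (selfSimilar (lam K) (P + D n + n)) -
        windowEntropy (K + P) (D n) (selfSimilar (lam K) (P + D n)) ≤ δ * n := by
  obtain ⟨n, hn, hpn, K, hK, P, hP⟩ := exists_sum_increments_le_mul
    (c := fun K i P => scaleEntropy (K + P) (selfSimilar (lam K) (P + i))) (M := log 4)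
    (fun K i => monotone_scaleEntropy_selfSimilar_diagonal (hlam K) K i)
    (fun K i j hij P => monotone_scaleEntropy_selfSimilar (hlam K) _ (by omega))
    (fun K i P => ⟨scaleEntropy_nonneg _ _,
      scaleEntropy_le_log_four _ (mass_selfSimilar (hlam K) _)⟩) hp hD K₀ hδ
  refine ⟨n, hn, hpn, K, hK, P, le_of_eq_of_le ?_ hP⟩
  rw [windowEntropy, windowEntropy, ← sum_sub_distrib, ← sum_range_reflect]
  refine sum_congr rfl fun i hi => ?_
  have hi := mem_range.1 hi
  rw [show P + (D n - 1 - i) + (i + 1 + n) = P + D n + n by omega,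
    show P + (D n - 1 - i) + (i + 1) = P + D n by omega, add_assoc K]

end SelfSimilar

/-! ### Integer models of the projected Cantor set -/

section ZeroOneExpansions

/-- The integers with `n` base `4` digits, all of them `0` or `1`. -/
def zeroOneExpansions (n : ℕ) : Finset ℤ :=
  (range n).powerset.image fun A => ∑ i ∈ A, 4 ^ i

lemma sum_four_pow_injective : Function.Injective fun A : Finset ℕ => ∑ i ∈ A, (4 : ℤ) ^ i := by
  intro A B h
  beta_reduce at h
  exact geomSum_injective (n := 4) (by norm_num) (by exact_mod_cast h)

lemma card_zeroOneExpansions (n : ℕ) : #(zeroOneExpansions n) = 2 ^ n := by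
  rw [zeroOneExpansions, card_image_of_injective _ sum_four_pow_injective, card_powerset,
    card_range]

lemma zeroOneExpansions_nonempty (n : ℕ) : (zeroOneExpansions n).Nonempty := by
  rw [← card_pos, card_zeroOneExpansions]
  positivity

lemma nonneg_of_mem_zeroOneExpansions {n : ℕ} {a : ℤ} (ha : a ∈ zeroOneExpansions n) : 0 ≤ a := by
  obtain ⟨A, -, rfl⟩ := mem_image.1 ha
  positivity

lemma three_mul_lt_of_mem_zeroOneExpansions {n : ℕ} {a : ℤ} (ha : a ∈ zeroOneExpansions n) :
    3 * a < 4 ^ n := by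
  obtain ⟨A, hA, rfl⟩ := mem_image.1 ha
  have sum_le : ∑ i ∈ A, (4 : ℤ) ^ i ≤ ∑ i ∈ range n, 4 ^ i :=
    sum_le_sum_of_subset_of_nonneg (mem_powerset.1 hA) fun _ _ _ => by positivity
  have geom_sum := geom_sum_mul (4 : ℤ) n
  linarith

lemma dilate_coin (c s : ℤ) : dilate c (coin s) = coin (c * s) := by
  rw [coin, coin, map_add, dilate_single, dilate_single, mul_zero]

lemma selfSimilar_coin_one (n : ℕ) : selfSimilar (coin 1) n = uniform (zeroOneExpansions n) := by
  rw [uniform, card_zeroOneExpansions, zeroOneExpansions, sum_image sum_four_pow_injective.injOn]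
  simp only [selfSimilar, dilate_coin, mul_one, prod_coin, card_range, Nat.cast_pow, inv_pow,
    Nat.cast_ofNat]

lemma selfSimilar_mul (lam lam' : ℝ≥0[ℤ]) (n : ℕ) :
    selfSimilar (lam * lam') n = selfSimilar lam n * selfSimilar lam' n := by
  simp only [selfSimilar, map_mul, prod_mul_distrib]

lemma selfSimilar_dilate (c : ℤ) (lam : ℝ≥0[ℤ]) (n : ℕ) :
    selfSimilar (dilate c lam) n = dilate c (selfSimilar lam n) := by
  simp only [selfSimilar, map_prod, dilate_dilate, mul_comm]

lemma selfSimilar_coin_mul_coin (c d : ℤ) (n : ℕ) :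
    selfSimilar (coin c * coin d) n =
      dilate c (uniform (zeroOneExpansions n)) * dilate d (uniform (zeroOneExpansions n)) := by
  rw [← mul_one c, ← mul_one d, ← dilate_coin, ← dilate_coin, selfSimilar_mul, selfSimilar_dilate,
    selfSimilar_dilate, selfSimilar_coin_one, mul_one, mul_one]

lemma dilate_uniform_mul_dilate_uniform {c d : ℤ} {E F : Finset ℤ}
    (inj : Set.InjOn (fun x : ℤ × ℤ => c * x.1 + d * x.2) (E ×ˢ F : Finset (ℤ × ℤ))) :
    dilate c (uniform E) * dilate d (uniform F) =
      uniform ((E ×ˢ F).image fun x => c * x.1 + d * x.2) := by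
  rw [uniform, uniform, uniform, sum_image inj, card_image_of_injOn inj, map_sum, map_sum,
    sum_mul_sum, ← sum_product']
  refine sum_congr rfl fun x _ => ?_
  rw [dilate_single, dilate_single, single_mul_single, card_product, Nat.cast_mul, mul_inv]

end ZeroOneExpansions

section ApproximatePoints

variable {t : ℝ} {n K : ℕ} {x y : ℤ × ℤ}

/-- The pairs of integers with `n` base `4` digits in `{0, 1}`, the digits of a finite word. -/
def cornerPairs (n : ℕ) : Finset (ℤ × ℤ) :=
  zeroOneExpansions n ×ˢ zeroOneExpansions n

/-- The projection of `x` in direction `t`; for `x ∈ cornerPairs n` it is, up to the factor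
`3 * 4 ^ (-n)`, an `n`-th level approximation of a point of `cornerC t`. -/
def project (t : ℝ) (x : ℤ × ℤ) : ℝ :=
  x.1 + t * x.2

/-- The integer parts of the projections of `cornerPairs n`; their number is comparable to the
covering number of `cornerC t` at scale `4 ^ (-n)`. -/
noncomputable def floorSet (t : ℝ) (n : ℕ) : Finset ℤ :=
  (cornerPairs n).image fun x => ⌊project t x⌋

/-- An integer approximation of `4 ^ K * project t x`, obtained by truncating the slope. -/
noncomputable def approxProject (t : ℝ) (K : ℕ) (x : ℤ × ℤ) : ℤ :=
  4 ^ K * x.1 + ⌊t * 4 ^ K⌋ * x.2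

/-- The law of `approxProject t K` at a uniformly random point of `cornerPairs 1`. -/
noncomputable def cornerMeasure (t : ℝ) (K : ℕ) : ℝ≥0[ℤ] :=
  coin (4 ^ K) * coin ⌊t * 4 ^ K⌋

/-- Distinct points of `cornerPairs n` have projections at distance at least `4 ^ (-3 * n)`. -/
def IsSeparated (t : ℝ) (n : ℕ) : Prop :=
  (cornerPairs n : Set (ℤ × ℤ)).Pairwise fun x y => (1 / 4) ^ (3 * n) ≤ |project t x - project t y|

lemma card_cornerPairs (n : ℕ) : #(cornerPairs n) = 4 ^ n := by
  rw [cornerPairs, card_product, card_zeroOneExpansions, ← mul_pow]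
  norm_num

lemma cornerPairs_nonempty (n : ℕ) : (cornerPairs n).Nonempty :=
  (zeroOneExpansions_nonempty n).product (zeroOneExpansions_nonempty n)

lemma floorSet_nonempty (t : ℝ) (n : ℕ) : (floorSet t n).Nonempty :=
  (cornerPairs_nonempty n).image _

lemma snd_nonneg_of_mem_cornerPairs (hx : x ∈ cornerPairs n) : (0 : ℝ) ≤ x.2 :=
  Int.cast_nonneg (nonneg_of_mem_zeroOneExpansions (mem_product.1 hx).2)

lemma snd_le_of_mem_cornerPairs (hx : x ∈ cornerPairs n) (hnK : n ≤ K) : (x.2 : ℝ) ≤ 4 ^ K := by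
  have snd_lt := three_mul_lt_of_mem_zeroOneExpansions (mem_product.1 hx).2
  have snd_nonneg := nonneg_of_mem_zeroOneExpansions (mem_product.1 hx).2
  have pow_le : (4 : ℤ) ^ n ≤ 4 ^ K := pow_le_pow_right₀ (by norm_num) hnK
  exact_mod_cast (by linarith : x.2 ≤ 4 ^ K)

lemma approxProject_mem_Icc (hx : x ∈ cornerPairs n) :
    (approxProject t K x : ℝ) ∈ Set.Icc (4 ^ K * project t x - x.2) (4 ^ K * project t x) := by
  have snd_nonneg := snd_nonneg_of_mem_cornerPairs hx
  have floor_le := mul_le_mul_of_nonneg_right (Int.floor_le (t * 4 ^ K)) snd_nonneg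
  have lt_floor := mul_le_mul_of_nonneg_right (Int.lt_floor_add_one (t * 4 ^ K)).le snd_nonneg
  rw [approxProject, project]
  push_cast
  constructor <;> linarith

lemma approxProject_mem_Ico_floor (hx : x ∈ cornerPairs n) (hnK : n ≤ K) :
    approxProject t K x ∈ Ico (4 ^ K * (⌊project t x⌋ - 1)) (4 ^ K * (⌊project t x⌋ + 1)) := by
  have approx := approxProject_mem_Icc (t := t) (K := K) hx
  have snd_le := snd_le_of_mem_cornerPairs hx hnK
  have floor_le : (4 : ℝ) ^ K * ⌊project t x⌋ ≤ 4 ^ K * project t x := by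
    gcongr
    exact Int.floor_le _
  have lt_floor : (4 : ℝ) ^ K * project t x < 4 ^ K * (⌊project t x⌋ + 1) := by
    gcongr
    exact Int.lt_floor_add_one _
  rw [mem_Ico]
  constructor
  · exact_mod_cast (by linarith [approx.1] :
      (4 : ℝ) ^ K * (⌊project t x⌋ - 1) ≤ approxProject t K x)
  · exact_mod_cast approx.2.trans_lt lt_floor

lemma approxProject_mem_Ico (ht : t ∈ Set.Icc 0 1) (hx : x ∈ cornerPairs n) :
    approxProject t K x ∈ Ico 0 (4 ^ (K + n)) := by
  obtain ⟨fst_mem, snd_mem⟩ := mem_product.1 hx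
  have fst_nonneg := nonneg_of_mem_zeroOneExpansions fst_mem
  have snd_nonneg := nonneg_of_mem_zeroOneExpansions snd_mem
  have slope_nonneg : 0 ≤ ⌊t * 4 ^ K⌋ :=
    Int.floor_nonneg.2 (mul_nonneg ht.1 (by positivity))
  have slope_le : ⌊t * 4 ^ K⌋ ≤ 4 ^ K := by
    have : (⌊t * 4 ^ K⌋ : ℝ) ≤ 4 ^ K :=
      (Int.floor_le _).trans (mul_le_of_le_one_left (by positivity) ht.2)
    exact_mod_cast this
  rw [approxProject, mem_Ico]
  refine ⟨by positivity, ?_⟩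
  calc 4 ^ K * x.1 + ⌊t * 4 ^ K⌋ * x.2 ≤ 4 ^ K * x.1 + 4 ^ K * x.2 := by gcongr
    _ = 4 ^ K * (x.1 + x.2) := by ring
    _ < 4 ^ K * 4 ^ n := by
      gcongr
      linarith [three_mul_lt_of_mem_zeroOneExpansions fst_mem,
        three_mul_lt_of_mem_zeroOneExpansions snd_mem]
    _ = 4 ^ (K + n) := (pow_add ..).symm

@[simp] lemma mass_cornerMeasure (t : ℝ) (K : ℕ) : mass (cornerMeasure t K) = 1 := by
  simp [cornerMeasure]

lemma support_selfSimilar_cornerMeasure_subset (t : ℝ) (K n : ℕ) :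
    (selfSimilar (cornerMeasure t K) n).coeff.support ⊆
      (cornerPairs n).image (approxProject t K) := by
  intro z hz
  rw [cornerMeasure, selfSimilar_coin_mul_coin] at hz
  obtain ⟨u, hu, v, hv, rfl⟩ := mem_support_coeff_mul hz
  obtain ⟨a, ha, rfl⟩ := exists_mul_eq_of_mem_support_dilate hu
  obtain ⟨b, hb, rfl⟩ := exists_mul_eq_of_mem_support_dilate hv
  exact mem_image.2 ⟨(a, b), mem_product.2
    ⟨support_coeff_uniform_subset _ ha, support_coeff_uniform_subset _ hb⟩, rfl⟩

lemma support_selfSimilar_cornerMeasure_subset_Ico (ht : t ∈ Set.Icc 0 1) (K n : ℕ) :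
    (selfSimilar (cornerMeasure t K) n).coeff.support ⊆ Ico 0 (4 ^ (K + n)) :=
  (support_selfSimilar_cornerMeasure_subset t K n).trans
    (image_subset_iff.2 fun _ hx => approxProject_mem_Ico ht hx)

lemma selfSimilar_cornerMeasure_eq_uniform
    (inj : Set.InjOn (approxProject t K) (cornerPairs n : Set (ℤ × ℤ))) :
    selfSimilar (cornerMeasure t K) n = uniform ((cornerPairs n).image (approxProject t K)) := by
  rw [cornerMeasure, selfSimilar_coin_mul_coin]
  exact dilate_uniform_mul_dilate_uniform inj

lemma image_approxProject_ediv_subset (hnK : n ≤ K) :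
    ((cornerPairs n).image (approxProject t K)).image (· / 4 ^ K) ⊆
      floorSet t n ∪ (floorSet t n).image (· - 1) := by
  intro z hz
  obtain ⟨u, hu, rfl⟩ := mem_image.1 hz
  obtain ⟨x, hx, rfl⟩ := mem_image.1 hu
  have floor_mem : ⌊project t x⌋ ∈ floorSet t n := mem_image_of_mem _ hx
  obtain ⟨le_approx, approx_lt⟩ := mem_Ico.1 (approxProject_mem_Ico_floor (t := t) hx hnK)
  have le_ediv : ⌊project t x⌋ - 1 ≤ approxProject t K x / 4 ^ K :=
    (Int.le_ediv_iff_mul_le (by positivity)).2 (by linarith)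
  have ediv_lt : approxProject t K x / 4 ^ K < ⌊project t x⌋ + 1 :=
    (Int.ediv_lt_iff_lt_mul (by positivity)).2 (by linarith)
  obtain h | h : approxProject t K x / 4 ^ K = ⌊project t x⌋ ∨
      approxProject t K x / 4 ^ K = ⌊project t x⌋ - 1 := by omega
  · exact mem_union_left _ (h ▸ floor_mem)
  · exact mem_union_right _ (mem_image.2 ⟨_, floor_mem, h.symm⟩)

lemma card_image_approxProject_ediv_le (hnK : n ≤ K) :
    #(((cornerPairs n).image (approxProject t K)).image (· / 4 ^ K)) ≤ 2 * #(floorSet t n) :=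
  calc _ ≤ _ := card_le_card (image_approxProject_ediv_subset hnK)
    _ ≤ #(floorSet t n) + #(floorSet t n) :=
      (card_union_le _ _).trans (Nat.add_le_add_left card_image_le _)
    _ = 2 * #(floorSet t n) := (two_mul _).symm

lemma log_two_mul_card_image_approxProject_ediv_le (hnK : n ≤ K) :
    log (2 * #(((cornerPairs n).image (approxProject t K)).image (· / 4 ^ K))) ≤
      log 4 + log #(floorSet t n) := by
  set cells := ((cornerPairs n).image (approxProject t K)).image (· / 4 ^ K)
  have : 0 < #cells := (((cornerPairs_nonempty n).image _).image _).card_pos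
  have : (0 : ℝ) < #(floorSet t n) := by exact_mod_cast (floorSet_nonempty t n).card_pos
  have cells_le : (#cells : ℝ) ≤ 2 * #(floorSet t n) := by
    exact_mod_cast card_image_approxProject_ediv_le hnK
  rw [← log_mul (by norm_num) (by positivity)]
  exact log_le_log (by positivity) (by linarith)

lemma IsSeparated.four_pow_le_abs_approxProject_sub (h : IsSeparated t n) (hn : 0 < n) {k : ℕ}
    (hnk : n ≤ k) (hx : x ∈ cornerPairs n) (hy : y ∈ cornerPairs n) (hxy : x ≠ y) :
    4 ^ k ≤ |approxProject t (k + 4 * n) x - approxProject t (k + 4 * n) y| := by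
  set K := k + 4 * n
  have approx_x := approxProject_mem_Icc (t := t) (K := K) hx
  have approx_y := approxProject_mem_Icc (t := t) (K := K) hy
  have snd_x := snd_le_of_mem_cornerPairs hx hnk
  have snd_y := snd_le_of_mem_cornerPairs hy hnk
  have scaled_separation : (4 : ℝ) ^ (k + n) ≤ |4 ^ K * project t x - 4 ^ K * project t y| := by
    rw [← mul_sub, abs_mul, abs_of_pos (by positivity)]
    calc (4 : ℝ) ^ (k + n) = 4 ^ K * (1 / 4) ^ (3 * n) := by
          rw [show K = k + n + 3 * n by omega, pow_add _ (k + n), mul_assoc, ← mul_pow]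
          norm_num
      _ ≤ _ := by gcongr; exact h hx hy hxy
  have four_mul_le : 4 * (4 : ℝ) ^ k ≤ 4 ^ (k + n) := by
    rw [← pow_succ']
    exact pow_le_pow_right₀ (by norm_num) (by omega)
  have approx_dist : |4 ^ K * project t x - 4 ^ K * project t y| ≤
      |(approxProject t K x : ℝ) - approxProject t K y| + 4 ^ k := by
    have := snd_nonneg_of_mem_cornerPairs hx
    have := snd_nonneg_of_mem_cornerPairs hy
    have := abs_le.1 (le_refl |(approxProject t K x : ℝ) - approxProject t K y|)
    exact abs_le.2 ⟨by linarith [approx_x.1, approx_x.2, approx_y.1, approx_y.2],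
      by linarith [approx_x.1, approx_x.2, approx_y.1, approx_y.2]⟩
  have : (4 : ℝ) ^ k ≤ |(approxProject t K x : ℝ) - approxProject t K y| := by
    linarith [pow_pos (by norm_num : (0 : ℝ) < 4) k]
  exact_mod_cast this

lemma IsSeparated.injOn_approxProject_ediv (h : IsSeparated t n) (hn : 0 < n) (hK : 5 * n ≤ K)
    {P D : ℕ} (hD : 4 * n ≤ D) :
    Set.InjOn (fun x => 4 ^ (P + D) * approxProject t K x / 4 ^ (K + P))
      (cornerPairs n : Set (ℤ × ℤ)) := by
  intro x hx y hy hxy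
  by_contra hne
  obtain ⟨k, rfl⟩ := Nat.exists_eq_add_of_le' (show 4 * n ≤ K by omega)
  have separation := h.four_pow_le_abs_approxProject_sub hn (by omega : n ≤ k) hx hy hne
  have same_cell : 4 ^ (P + D) * |approxProject t (k + 4 * n) x - approxProject t (k + 4 * n) y| <
      4 ^ (k + 4 * n + P) := by
    rw [← abs_of_pos (by positivity : (0 : ℤ) < 4 ^ (P + D)), ← abs_mul, mul_sub, abs_lt]
    have := sub_lt_of_ediv_eq (by positivity) hxy
    have := sub_lt_of_ediv_eq (by positivity) hxy.symm
    constructor <;> linarith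
  have pow_le : (4 : ℤ) ^ (k + 4 * n + P) ≤ 4 ^ (P + D) * 4 ^ k := by
    rw [← pow_add]
    exact pow_le_pow_right₀ (by norm_num) (by omega)
  exact same_cell.not_ge (pow_le.trans (mul_le_mul_of_nonneg_left separation (by positivity)))

end ApproximatePoints

section CoveringNumbers

variable {t : ℝ} {n K : ℕ}

lemma windowEntropy_le_log_four_add_log_card {μ : ℝ≥0[ℤ]} (hμ : mass μ = 1) {p d : ℕ}
    {F : Finset ℤ} (hF : F.Nonempty)
    (cover : ∀ z ∈ μ.coeff.support, ∃ f ∈ F, z ∈ Ico (4 ^ p * (f - 1)) (4 ^ p * (f + 2))) :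
    windowEntropy p d μ ≤ log 4 + log #F := by
  classical
  let S : Finset ℤ := F.biUnion fun f => Ico (4 ^ p * (f - 1)) (4 ^ p * (f - 1) + 4 ^ (p + 1))
  have support_subset : (μ * blockMeasure p).coeff.support ⊆ S := by
    intro w hw
    obtain ⟨z, hz, y, hy, rfl⟩ := mem_support_coeff_mul hw
    obtain ⟨f, hf, hzf⟩ := cover z hz
    have hy := mem_Ico.1 (support_coeff_uniform_subset _ hy)
    rw [mem_Ico] at hzf
    refine mem_biUnion.2 ⟨f, hf, mem_Ico.2 ?_⟩
    rw [pow_succ]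
    constructor <;> linarith
  have S_nonempty : S.Nonempty :=
    hF.biUnion fun f _ => nonempty_Ico.2 (lt_add_of_pos_right _ (by positivity))
  have card_le : #S ≤ #F * 4 ^ (p + 1) := by
    refine card_biUnion_le_card_mul _ _ _ fun f _ => ?_
    rw [Int.card_Ico, add_sub_cancel_left]
    exact_mod_cast le_rfl
  have log_card_le : log #S ≤ log #F + (p + 1) * log 4 := by
    have : (0 : ℝ) < #F := by exact_mod_cast hF.card_pos
    calc log #S ≤ log (#F * 4 ^ (p + 1)) :=
          log_le_log (by exact_mod_cast S_nonempty.card_pos) (by exact_mod_cast card_le)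
      _ = log #F + (p + 1) * log 4 := by
          rw [log_mul (by positivity) (by positivity), log_pow, Nat.cast_succ]
  have coarse := natCast_mul_log_four_le_entropy_mul_blockMeasure (p + d) hμ
  have fine := entropy_le_log_card support_subset (by simp [hμ])
  rw [windowEntropy_eq, hμ, NNReal.coe_one]
  push_cast at coarse
  linarith

lemma windowEntropy_selfSimilar_cornerMeasure_le (ht : t ∈ Set.Icc 0 1) (hnK : n ≤ K) (P : ℕ) :
    windowEntropy (K + P) n (selfSimilar (cornerMeasure t K) (P + n)) ≤
      log 4 + log #(floorSet t n) := by
  refine windowEntropy_le_log_four_add_log_card (mass_selfSimilar (mass_cornerMeasure t K) _)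
    (floorSet_nonempty t n) fun z hz => ?_
  rw [selfSimilar_add] at hz
  obtain ⟨u, hu, w, hw, rfl⟩ := mem_support_coeff_mul hz
  obtain ⟨v, hv, rfl⟩ := exists_mul_eq_of_mem_support_dilate hw
  obtain ⟨x, hx, rfl⟩ := mem_image.1 (support_selfSimilar_cornerMeasure_subset t K n hv)
  obtain ⟨u_nonneg, u_lt⟩ := mem_Ico.1 (support_selfSimilar_cornerMeasure_subset_Ico ht K P hu)
  obtain ⟨le_approx, approx_lt⟩ := mem_Ico.1 (approxProject_mem_Ico_floor (t := t) hx hnK)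
  have le_scaled := mul_le_mul_of_nonneg_left le_approx (by positivity : (0 : ℤ) ≤ 4 ^ P)
  have scaled_lt := mul_lt_mul_of_pos_left approx_lt (by positivity : (0 : ℤ) < 4 ^ P)
  refine ⟨⌊project t x⌋, mem_image_of_mem _ hx, mem_Ico.2 ?_⟩
  rw [pow_add] at u_lt ⊢
  constructor <;> linarith

lemma natCast_mul_scaleEntropy_selfSimilar_le {lam : ℝ≥0[ℤ]} (hlam : mass lam = 1)
    (K P i j : ℕ) :
    j * scaleEntropy (K + P) (selfSimilar lam (P + i)) ≤
      windowEntropy (K + P) (i + j) (selfSimilar lam (P + (i + j))) := by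
  have scaleEntropy_le : ∀ h ∈ range j, scaleEntropy (K + P) (selfSimilar lam (P + i)) ≤
      scaleEntropy (K + P + h) (selfSimilar lam (P + (i + j))) := by
    intro h hh
    have hh := mem_range.1 hh
    calc scaleEntropy (K + P) (selfSimilar lam (P + i))
        ≤ scaleEntropy (K + (P + h)) (selfSimilar lam (P + h + i)) :=
          monotone_scaleEntropy_selfSimilar_diagonal hlam K i (Nat.le_add_right P h)
      _ ≤ scaleEntropy (K + (P + h)) (selfSimilar lam (P + (i + j))) :=
          monotone_scaleEntropy_selfSimilar hlam _ (by omega)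
      _ = _ := by rw [add_assoc K]
  calc j * scaleEntropy (K + P) (selfSimilar lam (P + i))
      = ∑ _h ∈ range j, scaleEntropy (K + P) (selfSimilar lam (P + i)) := by simp
    _ ≤ ∑ h ∈ range j, scaleEntropy (K + P + h) (selfSimilar lam (P + (i + j))) :=
        sum_le_sum scaleEntropy_le
    _ ≤ windowEntropy (K + P) (i + j) (selfSimilar lam (P + (i + j))) :=
        sum_le_sum_of_subset_of_nonneg (range_subset_range.2 (Nat.le_add_left j i))
          fun _ _ _ => scaleEntropy_nonneg _ _

lemma exists_forall_scaleEntropy_selfSimilar_cornerMeasure_le (ht : t ∈ Set.Icc 0 1) {s s' Λ : ℝ}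
    (hs : s < s') (hΛ : ∀ n : ℕ, log #(floorSet t n) ≤ Λ + s * n * log 4) (i : ℕ) :
    ∃ K₀, ∀ K ≥ K₀, ∀ P,
      scaleEntropy (K + P) (selfSimilar (cornerMeasure t K) (P + i)) ≤ s' * log 4 := by
  have gap_pos : 0 < (s' - s) * log 4 := mul_pos (sub_pos.2 hs) (log_pos (by norm_num))
  obtain ⟨j, hj⟩ := exists_nat_gt (max 0 ((log 4 + Λ + s * i * log 4) / ((s' - s) * log 4)))
  obtain ⟨j_pos, hj⟩ := max_lt_iff.1 hj
  rw [div_lt_iff₀ gap_pos] at hj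
  refine ⟨i + j, fun K hK P => le_of_mul_le_mul_left ?_ j_pos⟩
  have := natCast_mul_scaleEntropy_selfSimilar_le (mass_cornerMeasure t K) K P i j
  have := windowEntropy_selfSimilar_cornerMeasure_le ht hK P
  have := hΛ (i + j)
  push_cast at this
  linarith

lemma exists_log_card_floorSet_ge_of_isSeparated (ht : t ∈ Set.Icc 0 1) {s : ℝ} (hs₀ : 0 ≤ s)
    (hs₁ : s < 1) {r : ℕ} (hr : 0 < r) :
    ∃ κ > 0, ∃ C, ∀ {n K P B : ℕ} {Γ : ℝ}, IsSeparated t n → 0 < n → 5 * n ≤ K → 4 * n ≤ r * B →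
      (∀ P', scaleEntropy (K + P') (selfSimilar (cornerMeasure t K) (P' + r * B)) ≤ s * log 4) →
      0 < Γ →
      windowEntropy (K + P) (r * B) (selfSimilar (cornerMeasure t K) (P + r * B + n)) -
        windowEntropy (K + P) (r * B) (selfSimilar (cornerMeasure t K) (P + r * B)) ≤ Γ →
      n * log 4 ≤ log #(floorSet t n) + 2 * B * log 4 + C + κ * Γ := by
  obtain ⟨κ, hκ, C, hC⟩ := exists_log_card_le_of_windowEntropy_mul_sub_le hs₀ hs₁ hr
  refine ⟨κ, hκ, log 4 + C, fun {n K P B Γ} hsep hn hK hB hle hΓ hgrowth => ?_⟩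
  have inj := hsep.injOn_approxProject_ediv hn hK (P := P) hB
  have inj_approx : Set.InjOn (approxProject t K) (cornerPairs n : Set (ℤ × ℤ)) :=
    fun x hx y hy h => inj hx hy (by simp only [h])
  have pow_pos : (0 : ℤ) < 4 ^ (P + r * B) := by positivity
  set E := (cornerPairs n).image (approxProject t K)
  set S := E.image (4 ^ (P + r * B) * ·)
  have card_S : #S = 4 ^ n := by
    rw [card_image_of_injective _ (mul_right_injective₀ pow_pos.ne'),
      card_image_of_injOn inj_approx, card_cornerPairs]
  have S_inj : Set.InjOn (· / 4 ^ (K + P)) (S : Set ℤ) := by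
    simp only [S, E, image_image, coe_image]
    exact Set.InjOn.image_of_comp inj
  have cells_eq : S.image (· / 4 ^ (K + P + r * B)) = E.image (· / 4 ^ K) := by
    rw [image_image]
    refine image_congr fun z _ => ?_
    rw [Function.comp_apply, add_assoc K, add_comm K, pow_add _ _ K,
      Int.mul_ediv_mul_of_pos _ _ pow_pos]
  rw [selfSimilar_add _ _ n, selfSimilar_cornerMeasure_eq_uniform inj_approx,
    dilate_uniform pow_pos.ne'] at hgrowth
  have := hC (((cornerPairs_nonempty n).image _).image _)
    (mass_selfSimilar (mass_cornerMeasure t K) _) S_inj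
    (by simpa only [add_assoc] using support_selfSimilar_cornerMeasure_subset_Ico ht K _)
    (fun h _ => (monotone_scaleEntropy_selfSimilar (mass_cornerMeasure t K) _
      (by omega : P + r * B ≤ P + h + r * B)).trans
        (by simpa only [add_assoc] using hle (P + h))) hΓ hgrowth
  rw [card_S, cells_eq, Nat.cast_pow, log_pow, Nat.cast_ofNat] at this
  linarith [log_two_mul_card_image_approxProject_ediv_le (t := t) (by omega : n ≤ K)]

lemma exists_lt_log_card_floorSet (ht : t ∈ Set.Icc 0 1) (hsep : ∃ᶠ n in atTop, IsSeparated t n)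
    {s : ℝ} (hs : s < 1) (Λ : ℝ) : ∃ n : ℕ, Λ + s * n * log 4 < log #(floorSet t n) := by
  by_contra! hΛ
  have gap_pos : 0 < 1 - s := sub_pos.2 hs
  obtain ⟨s', hs', hs'₁⟩ := exists_between (max_lt hs one_pos)
  obtain ⟨hss', hs'₀⟩ := max_lt_iff.1 hs'
  obtain ⟨ρ, hρ⟩ := exists_nat_gt (4 / (1 - s))
  have ρ_pos : (0 : ℝ) < ρ := lt_trans (by positivity) hρ
  rw [div_lt_iff₀ gap_pos] at hρ
  obtain ⟨κ, hκ, C, hC⟩ := exists_log_card_floorSet_ge_of_isSeparated ht hs'₀.le hs'₁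
    (Nat.mul_pos four_pos (Nat.cast_pos.1 ρ_pos))
  obtain ⟨n₁, hn₁⟩ := exists_nat_gt (4 * (Λ + C + 2 * log 4) / ((1 - s) * log 4))
  rw [div_lt_iff₀ (by positivity)] at hn₁
  choose K₀ hK₀ using exists_forall_scaleEntropy_selfSimilar_cornerMeasure_le ht hss' hΛ
  obtain ⟨n, hn, hn_sep, K, hK, P, hP⟩ := exists_windowEntropy_selfSimilar_sub_le
    (mass_cornerMeasure t) hsep (D := fun n => 4 * ρ * (n / ρ + 1)) (A := 8)
    (n₀ := max ρ (max 1 n₁))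
    (fun n hn => by
      have := Nat.mul_div_le n ρ
      have := (le_max_left _ _).trans hn
      linarith)
    (fun n => max (K₀ (4 * ρ * (n / ρ + 1))) (5 * n))
    (δ := (1 - s) * log 4 / (4 * κ)) (by positivity)
  simp only [ge_iff_le, max_le_iff] at hn hK
  have n_pos : (0 : ℝ) < n := by exact_mod_cast hn.2.1
  have card_bound := hC hn_sep hn.2.1 hK.2
    (by linarith [Nat.lt_mul_div_succ n (Nat.cast_pos.1 ρ_pos)]) (hK₀ _ K hK.1) (by positivity) hP
  have block_count_le : ((n / ρ + 1 : ℕ) : ℝ) * log 4 ≤ ((1 - s) * n / 4 + 1) * log 4 := by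
    have div_le : (n : ℝ) / ρ ≤ (1 - s) * n / 4 := by
      rw [div_le_iff₀ ρ_pos]
      linarith [mul_le_mul_of_nonneg_left hρ.le n_pos.le]
    push_cast
    gcongr
    exact Nat.cast_div_le.trans div_le
  have growth_eq : κ * ((1 - s) * log 4 / (4 * κ) * n) = (1 - s) * log 4 * n / 4 := by field_simp
  have n_large := mul_le_mul_of_nonneg_right (Nat.cast_le.2 hn.2.2 : (n₁ : ℝ) ≤ n)
    (by positivity : 0 ≤ (1 - s) * log 4)
  linarith [hΛ n]

end CoveringNumbers

/-! ### Separation of the projections -/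

section Words

variable {t : ℝ} {n : ℕ} {A B A' B' : Finset ℕ} {x y : ℤ × ℤ}

/-- The word of `n` digits in `Omega t` which encodes two sets of indices. The order is reversed,
since the last digit of a word has the smallest weight. -/
noncomputable def indexWord (t : ℝ) (n : ℕ) (A B : Finset ℕ) (j : Fin n) : ℝ :=
  (if (j.rev : ℕ) ∈ A then 3 else 0) + if (j.rev : ℕ) ∈ B then 3 * t else 0

lemma indexWord_mem_Omega (t : ℝ) (n : ℕ) (A B : Finset ℕ) (j : Fin n) :
    indexWord t n A B j ∈ Omega t := by
  unfold indexWord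
  split_ifs <;> simp [Omega, add_comm]

lemma mem_iff_of_indexWord_eq (ht : t ∈ Set.Ioo 0 1) {j : Fin n}
    (h : indexWord t n A B j = indexWord t n A' B' j) :
    ((j.rev : ℕ) ∈ A ↔ (j.rev : ℕ) ∈ A') ∧ ((j.rev : ℕ) ∈ B ↔ (j.rev : ℕ) ∈ B') := by
  obtain ⟨t_pos, t_lt⟩ := ht
  unfold indexWord at h
  split_ifs at h <;> first | (exfalso; linarith) | tauto

lemma eq_of_indexWord_eq (ht : t ∈ Set.Ioo 0 1) (hA : A ⊆ range n) (hB : B ⊆ range n)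
    (hA' : A' ⊆ range n) (hB' : B' ⊆ range n) (h : indexWord t n A B = indexWord t n A' B') :
    A = A' ∧ B = B' := by
  have mem_iff {i : ℕ} (hi : i < n) : (i ∈ A ↔ i ∈ A') ∧ (i ∈ B ↔ i ∈ B') := by
    simpa only [Fin.rev_rev] using mem_iff_of_indexWord_eq ht (congrFun h (Fin.rev ⟨i, hi⟩))
  have outside {E : Finset ℕ} (hE : E ⊆ range n) {i : ℕ} (hi : ¬ i < n) : i ∉ E :=
    fun hiE => hi (mem_range.1 (hE hiE))
  constructor <;> ext i <;> by_cases hi : i < n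
  · exact (mem_iff hi).1
  · exact iff_of_false (outside hA hi) (outside hA' hi)
  · exact (mem_iff hi).2
  · exact iff_of_false (outside hB hi) (outside hB' hi)

lemma sum_indexWord_div (t : ℝ) (hA : A ⊆ range n) (hB : B ⊆ range n) :
    ∑ j, indexWord t n A B j / 4 ^ ((j : ℕ) + 1) =
      3 / 4 ^ n * project t (∑ i ∈ A, 4 ^ i, ∑ i ∈ B, 4 ^ i) := by
  have sum_indicator {E : Finset ℕ} (hE : E ⊆ range n) (c : ℝ) :
      ∑ i : Fin n, (if (i : ℕ) ∈ E then c else 0) * 4 ^ (i : ℕ) = c * ∑ i ∈ E, 4 ^ i := by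
    rw [Fin.sum_univ_eq_sum_range fun i => (if i ∈ E then c else 0) * 4 ^ i, mul_sum]
    simp only [ite_mul, zero_mul]
    rw [sum_ite_mem, inter_eq_right.2 hE]
  have weight (i : Fin n) : (4 : ℝ) ^ n = 4 ^ ((i.rev : ℕ) + 1) * 4 ^ (i : ℕ) := by
    rw [← pow_add, Fin.val_rev]
    congr 1
    omega
  calc ∑ j, indexWord t n A B j / 4 ^ ((j : ℕ) + 1)
      = ∑ i : Fin n, indexWord t n A B i.rev / 4 ^ ((i.rev : ℕ) + 1) :=
        (Equiv.sum_comp Fin.revPerm fun j => indexWord t n A B j / 4 ^ ((j : ℕ) + 1)).symm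
    _ = ∑ i : Fin n, ((if (i : ℕ) ∈ A then 3 else 0) * 4 ^ (i : ℕ) +
          (if (i : ℕ) ∈ B then 3 * t else 0) * 4 ^ (i : ℕ)) / 4 ^ n := by
      refine sum_congr rfl fun i _ => ?_
      rw [weight i, indexWord, Fin.rev_rev, ← add_mul, mul_div_mul_right _ _ (by positivity)]
    _ = 3 / 4 ^ n * project t (∑ i ∈ A, 4 ^ i, ∑ i ∈ B, 4 ^ i) := by
      rw [← sum_div, sum_add_distrib, sum_indicator hA, sum_indicator hB, project]
      push_cast
      ring

lemma exists_index_sets_of_mem_cornerPairs (hx : x ∈ cornerPairs n) :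
    ∃ A ⊆ range n, ∃ B ⊆ range n, (∑ i ∈ A, 4 ^ i, ∑ i ∈ B, 4 ^ i) = x := by
  obtain ⟨hx₁, hx₂⟩ := mem_product.1 hx
  obtain ⟨A, hA, hxA⟩ := mem_image.1 hx₁
  obtain ⟨B, hB, hxB⟩ := mem_image.1 hx₂
  exact ⟨A, mem_powerset.1 hA, B, mem_powerset.1 hB, Prod.ext hxA hxB⟩

lemma hasExactOverlap_of_project_eq (ht : t ∈ Set.Ioo 0 1) (hx : x ∈ cornerPairs n)
    (hy : y ∈ cornerPairs n) (hne : x ≠ y) (h : project t x = project t y) :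
    HasExactOverlap t := by
  obtain ⟨A, hA, B, hB, rfl⟩ := exists_index_sets_of_mem_cornerPairs hx
  obtain ⟨A', hA', B', hB', rfl⟩ := exists_index_sets_of_mem_cornerPairs hy
  have words_ne : indexWord t n A B ≠ indexWord t n A' B' := by
    intro words_eq
    obtain ⟨rfl, rfl⟩ := eq_of_indexWord_eq ht hA hB hA' hB' words_eq
    exact hne rfl
  have n_pos : 0 < n := by
    refine Nat.pos_of_ne_zero ?_
    rintro rfl
    exact words_ne (Subsingleton.elim _ _)
  refine ⟨n, n_pos, _, _, indexWord_mem_Omega t n A B, indexWord_mem_Omega t n A' B', words_ne, ?_⟩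
  rw [sum_indexWord_div t hA hB, sum_indexWord_div t hA' hB', h]

end Words

section RationalApproximation

variable {t : ℝ}

lemma mul_eq_mul_of_abs_add_mul_lt {d e d' e' : ℤ} {n : ℕ} (hn : 0 < n) (he : |(e : ℝ)| ≤ 4 ^ n)
    (he' : |(e' : ℝ)| ≤ 4 ^ (n + 1)) (h : |d + t * e| < (1 / 4) ^ (3 * n))
    (h' : |d' + t * e'| < (1 / 4) ^ (3 * (n + 1))) : d * e' = d' * e := by
  rw [← sub_eq_zero, ← Int.abs_lt_one_iff]
  have inv_pow_le : (1 / 4 : ℝ) ^ n ≤ 1 / 4 := pow_le_of_le_one (by norm_num) (by norm_num) hn.ne'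
  have cancel : (1 / 4 : ℝ) ^ n * 4 ^ n = 1 := by
    rw [← mul_pow]
    norm_num
  have det_lt : |(d * e' - d' * e : ℝ)| < 1 :=
    calc |(d * e' - d' * e : ℝ)| = |(d + t * e) * e' - (d' + t * e') * e| := by ring_nf
      _ ≤ |d + t * e| * |(e' : ℝ)| + |d' + t * e'| * |(e : ℝ)| := by
        rw [← abs_mul, ← abs_mul]
        exact abs_sub _ _
      _ ≤ (1 / 4) ^ (3 * n) * 4 ^ (n + 1) + (1 / 4) ^ (3 * (n + 1)) * 4 ^ n := by gcongr
      _ = (4 + 1 / 64) * ((1 / 4) ^ n * (1 / 4) ^ n) := by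
        rw [pow_mul', pow_mul', pow_succ (1 / 4 : ℝ), pow_succ (4 : ℝ)]
        linear_combination (4 + 1 / 64) * ((1 / 4 : ℝ) ^ n) ^ 2 * cancel
      _ ≤ (4 + 1 / 64) * (1 / 4 * (1 / 4)) := by gcongr
      _ < 1 := by norm_num
  exact_mod_cast det_lt

-- Consecutive approximations are proportional, hence all are, and then their errors can only be
-- so small if they vanish.
lemma add_mul_eq_zero_of_forall_abs_add_mul_lt {d e : ℕ → ℤ} {N : ℕ} (hN : 0 < N)
    (he₀ : ∀ n ≥ N, e n ≠ 0) (he : ∀ n ≥ N, |(e n : ℝ)| ≤ 4 ^ n)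
    (h : ∀ n ≥ N, |d n + t * e n| < (1 / 4) ^ (3 * n)) : d N + t * e N = 0 := by
  have proportional {n : ℕ} (hn : N ≤ n) : d N * e n = d n * e N := by
    induction n, hn using Nat.le_induction with
    | base => rfl
    | succ n hn ih =>
      have step : d n * e (n + 1) = d (n + 1) * e n :=
        mul_eq_mul_of_abs_add_mul_lt (hN.trans_le hn) (he n hn) (he _ (hn.trans n.le_succ)) (h n hn)
          (h _ (hn.trans n.le_succ))
      refine mul_right_cancel₀ (he₀ n hn) ?_
      linear_combination e (n + 1) * ih + e N * step
  have error_le {n : ℕ} (hn : N ≤ n) : |d N + t * e N| ≤ |(e N : ℝ)| * (1 / 4) ^ n := by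
    have one_le : (1 : ℝ) ≤ |(e n : ℝ)| := by exact_mod_cast Int.one_le_abs (he₀ n hn)
    have cast_proportional : (d N * e n : ℝ) = d n * e N := by exact_mod_cast proportional hn
    calc |d N + t * e N| ≤ |d N + t * e N| * |(e n : ℝ)| :=
          le_mul_of_one_le_right (abs_nonneg _) one_le
      _ = |(e N : ℝ)| * |d n + t * e n| := by
        rw [← abs_mul, ← abs_mul]
        congr 1
        linear_combination cast_proportional
      _ ≤ |(e N : ℝ)| * (1 / 4) ^ (3 * n) := by gcongr; exact (h n hn).le
      _ ≤ |(e N : ℝ)| * (1 / 4) ^ n := by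
        gcongr _ * ?_
        exact pow_le_pow_of_le_one (by norm_num) (by norm_num) (by omega)
  have bound_tendsto : Tendsto (fun n : ℕ => |(e N : ℝ)| * (1 / 4) ^ n) atTop (𝓝 0) := by
    simpa only [mul_zero] using (tendsto_pow_atTop_nhds_zero_of_lt_one
      (by norm_num : (0 : ℝ) ≤ 1 / 4) (by norm_num)).const_mul |(e N : ℝ)|
  exact abs_nonpos_iff.1 (ge_of_tendsto bound_tendsto
    ((eventually_ge_atTop N).mono fun _ hn => error_le hn))

end RationalApproximation

lemma exists_abs_project_sub_lt_of_not_isSeparated {t : ℝ} {n : ℕ} (h : ¬ IsSeparated t n) :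
    ∃ x ∈ cornerPairs n, ∃ y ∈ cornerPairs n, x.2 ≠ y.2 ∧
      |project t x - project t y| < (1 / 4) ^ (3 * n) := by
  simp only [IsSeparated, Set.Pairwise, mem_coe] at h
  push Not at h
  obtain ⟨x, hx, y, hy, hne, hlt⟩ := h
  refine ⟨x, hx, y, hy, fun snd_eq => hne (Prod.ext ?_ snd_eq), hlt⟩
  have fst_dist : |(x.1 - y.1 : ℝ)| < 1 := by
    rw [project, project, snd_eq, add_sub_add_right_eq_sub] at hlt
    exact hlt.trans_le (pow_le_one₀ (by norm_num) (by norm_num))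
  exact sub_eq_zero.1 (Int.abs_lt_one_iff.1 (by exact_mod_cast fst_dist))

lemma abs_snd_sub_le_of_mem_cornerPairs {n : ℕ} {x y : ℤ × ℤ} (hx : x ∈ cornerPairs n)
    (hy : y ∈ cornerPairs n) : |((x.2 - y.2 : ℤ) : ℝ)| ≤ 4 ^ n := by
  push_cast
  exact abs_sub_le_of_nonneg_of_le (snd_nonneg_of_mem_cornerPairs hx)
    (snd_le_of_mem_cornerPairs hx le_rfl) (snd_nonneg_of_mem_cornerPairs hy)
    (snd_le_of_mem_cornerPairs hy le_rfl)

lemma frequently_isSeparated_of_not_hasExactOverlap {t : ℝ} (ht : t ∈ Set.Ioo 0 1)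
    (h : ¬ HasExactOverlap t) : ∃ᶠ n in atTop, IsSeparated t n := by
  intro not_separated
  obtain ⟨N, hN⟩ := eventually_atTop.1 (not_separated.and (eventually_gt_atTop 0))
  have close_pairs (n : ℕ) (hn : n ≥ N) :=
    exists_abs_project_sub_lt_of_not_isSeparated (hN n hn).1
  choose! x hx y hy snd_ne hlt using close_pairs
  have project_sub (n : ℕ) : project t (x n) - project t (y n) =
      ((x n).1 - (y n).1 : ℤ) + t * ((x n).2 - (y n).2 : ℤ) := by
    simp only [project]
    push_cast
    ring
  have project_eq : project t (x N) - project t (y N) = 0 := by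
    rw [project_sub]
    refine add_mul_eq_zero_of_forall_abs_add_mul_lt (d := fun n => (x n).1 - (y n).1)
      (e := fun n => (x n).2 - (y n).2) (hN N le_rfl).2 (fun n hn => sub_ne_zero.2 (snd_ne n hn))
      (fun n hn => abs_snd_sub_le_of_mem_cornerPairs (hx n hn) (hy n hn)) fun n hn => ?_
    rw [← project_sub]
    exact hlt n hn
  exact h (hasExactOverlap_of_project_eq ht (hx N le_rfl) (hy N le_rfl)
    (fun eq => snd_ne N le_rfl (congrArg Prod.snd eq)) (sub_eq_zero.1 project_eq))

/-! ### Hausdorff dimension and digit expansions -/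

section HausdorffDimension

lemma div_pow_rpow_logb {b m : ℝ} (hb : 1 < b) (hm : 0 < m) {c : ℝ} (hc : 0 ≤ c) (j : ℕ) :
    (c / b ^ j) ^ logb b m = c ^ logb b m / m ^ j := by
  have b_pos : 0 < b := zero_lt_one.trans hb
  rw [div_rpow hc (by positivity), ← rpow_natCast b, ← rpow_mul b_pos.le, mul_comm (j : ℝ),
    rpow_mul b_pos.le, rpow_logb b_pos hb.ne' hm, rpow_natCast]

lemma dimH_le_logb_of_forall_subset_biUnion_closedBall {X : Type*} [MetricSpace X] {s : Set X}
    {b C : ℝ} {M : ℕ} (hb : 1 < b) (hM : 0 < M) (hC : 0 ≤ C)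
    (h : ∀ j : ℕ, ∃ F : Finset X, #F ≤ M ^ j ∧ s ⊆ ⋃ x ∈ F, Metric.closedBall x (C / b ^ j)) :
    dimH s ≤ ENNReal.ofReal (logb b M) := by
  borelize X
  choose F card_F subset_F using h
  have logb_nonneg : 0 ≤ logb b M := logb_nonneg hb (by exact_mod_cast hM)
  have ediam_le (j : ℕ) (x : F j) :
      Metric.ediam (Metric.closedBall (x : X) (C / b ^ j)) ≤ ENNReal.ofReal (2 * C / b ^ j) := by
    refine Metric.ediam_le_of_forall_dist_le fun y hy z hz => ?_
    rw [mul_div_assoc, two_mul]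
    exact (dist_triangle_right y z x).trans (add_le_add hy hz)
  have radius_tendsto : Tendsto (fun j : ℕ => ENNReal.ofReal (2 * C / b ^ j)) atTop (𝓝 0) := by
    rw [← ENNReal.ofReal_zero]
    exact ENNReal.tendsto_ofReal ((tendsto_pow_atTop_atTop_of_one_lt hb).const_div_atTop _)
  have sum_le (j : ℕ) : ∑ x : F j, Metric.ediam (Metric.closedBall (x : X) (C / b ^ j)) ^ logb b M ≤
      ENNReal.ofReal ((2 * C) ^ logb b M) :=
    calc _ ≤ ∑ _ : F j, ENNReal.ofReal (2 * C / b ^ j) ^ logb b M :=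
          sum_le_sum fun x _ => ENNReal.rpow_le_rpow (ediam_le j x) logb_nonneg
      _ = ENNReal.ofReal (#(F j) * ((2 * C) ^ logb b M / M ^ j)) := by
        rw [sum_const, card_univ, Fintype.card_coe, nsmul_eq_mul,
          ENNReal.ofReal_rpow_of_nonneg (by positivity) logb_nonneg,
          div_pow_rpow_logb hb (by exact_mod_cast hM) (by positivity),
          ENNReal.ofReal_mul (by positivity), ENNReal.ofReal_natCast]
      _ ≤ ENNReal.ofReal (M ^ j * ((2 * C) ^ logb b M / M ^ j)) := by
        gcongr
        exact_mod_cast card_F j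
      _ = ENNReal.ofReal ((2 * C) ^ logb b M) := by rw [mul_div_cancel₀ _ (by positivity)]
  refine dimH_le_of_hausdorffMeasure_ne_top
    (ne_top_of_le_ne_top (ENNReal.ofReal_ne_top (r := (2 * C) ^ logb b M)) ?_)
  rw [coe_toNNReal _ logb_nonneg]
  refine (MeasureTheory.Measure.hausdorffMeasure_le_liminf_sum (logb b M) s _ radius_tendsto
    (fun j (x : F j) => Metric.closedBall (x : X) (C / b ^ j)) (.of_forall ediam_le)
    (.of_forall fun j => ?_)).trans ?_
  · exact (subset_F j).trans_eq (Set.biUnion_eq_iUnion _ _)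
  · exact liminf_le_of_frequently_le' (.of_forall sum_le)

lemma le_dimH_of_holderOnWith_of_Icc_subset_image {X : Type*} [MetricSpace X] {s : Set X}
    {f : X → ℝ} {C σ : ℝ≥0} (hσ : 0 < σ) (hf : HolderOnWith C σ f s)
    (hs : Set.Icc 0 1 ⊆ f '' s) : σ ≤ dimH s := by
  have dimH_Icc : dimH (Set.Icc (0 : ℝ) 1) = 1 := by
    rw [Real.dimH_of_nonempty_interior (by simp), Module.finrank_self, Nat.cast_one]
  have one_le := (dimH_mono hs).trans (hf.dimH_image_le hσ)
  rwa [dimH_Icc, ENNReal.le_div_iff_mul_le (.inl (by exact_mod_cast hσ.ne'))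
    (.inl ENNReal.coe_ne_top), one_mul] at one_le

-- Compose the inverse of `Φ` with the base `M` expansion to map `range Φ` onto `[0, 1]`.
lemma logb_le_dimH_range_of_le_dist {X : Type*} [MetricSpace X] {M : ℕ} (hM : 1 < M) {b c : ℝ}
    (hb : 1 < b) (hc : 0 < c) {Φ : (ℕ → Fin M) → X}
    (h : ∀ ⦃x y⦄, x ≠ y → c / b ^ PiNat.firstDiff x y ≤ dist (Φ x) (Φ y)) :
    ENNReal.ofReal (logb b M) ≤ dimH (Set.range Φ) := by
  have : Nonempty (ℕ → Fin M) := ⟨fun _ => ⟨0, by omega⟩⟩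
  have one_lt_M : (1 : ℝ) < M := by exact_mod_cast hM
  have logb_pos : 0 < logb b M := logb_pos hb one_lt_M
  have Φ_injective : Function.Injective Φ := by
    intro x y hxy
    by_contra hne
    exact (by positivity : 0 < c / b ^ PiNat.firstDiff x y).not_ge
      ((h hne).trans_eq (by rw [hxy, dist_self]))
  set f : X → ℝ := fun z => ofDigits (Function.invFun Φ z)
  have f_apply (x : ℕ → Fin M) : f (Φ x) = ofDigits x :=
    congrArg ofDigits (Function.leftInverse_invFun Φ_injective x)
  have f_holder : HolderOnWith (c⁻¹ ^ logb b M).toNNReal (logb b M).toNNReal f (Set.range Φ) := by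
    rintro _ ⟨x, rfl⟩ _ ⟨y, rfl⟩
    obtain rfl | hne := eq_or_ne x y
    · simp
    rw [f_apply, f_apply, edist_dist, edist_dist, coe_toNNReal _ logb_pos.le,
      ENNReal.ofReal_rpow_of_nonneg dist_nonneg logb_pos.le, ← ENNReal.ofReal,
      ← ENNReal.ofReal_mul (by positivity), ← mul_rpow (by positivity) dist_nonneg]
    gcongr
    calc dist (ofDigits x) (ofDigits y) ≤ ((M : ℝ) ^ PiNat.firstDiff x y)⁻¹ :=
          abs_ofDigits_sub_ofDigits_le fun _ hi => PiNat.apply_eq_of_lt_firstDiff hi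
      _ = (1 / b ^ PiNat.firstDiff x y) ^ logb b M := by
        rw [div_pow_rpow_logb hb (by positivity) zero_le_one, one_rpow, one_div]
      _ ≤ (c⁻¹ * dist (Φ x) (Φ y)) ^ logb b M := by
        gcongr
        rw [← div_le_iff₀' (by positivity), div_inv_eq_mul, one_div_mul_eq_div]
        exact h hne
  refine le_dimH_of_holderOnWith_of_Icc_subset_image (toNNReal_pos.2 logb_pos) f_holder
    fun z hz => ?_
  obtain ⟨x, -, rfl⟩ := ofDigits_SurjOn hM hz
  exact ⟨Φ x, ⟨x, rfl⟩, f_apply x⟩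

end HausdorffDimension

section DigitExpansions

variable {b : ℝ} {s : Set ℝ} {V : Finset ℝ}

lemma abs_sub_sum_range_le_of_hasSum {f : ℕ → ℝ} {C z : ℝ} (hb : 2 ≤ b) (hf : ∀ j, |f j| ≤ C)
    (hz : HasSum (fun j => f j / b ^ j) z) (k : ℕ) :
    |z - ∑ j ∈ range k, f j / b ^ j| ≤ 2 * C / b ^ k := by
  have C_nonneg : 0 ≤ C := (abs_nonneg _).trans (hf 0)
  have inv_b_le : b⁻¹ ≤ 1 / 2 := by
    rw [one_div]
    exact inv_anti₀ two_pos hb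
  have step (j : ℕ) :
      dist (∑ i ∈ range j, f i / b ^ i) (∑ i ∈ range (j + 1), f i / b ^ i) ≤ C * b⁻¹ ^ j := by
    rw [sum_range_succ, dist_self_add_right, norm_div, norm_pow, norm_eq_abs, norm_eq_abs,
      abs_of_pos (by positivity : 0 < b), inv_pow, ← div_eq_mul_inv]
    gcongr
    exact hf j
  calc |z - ∑ j ∈ range k, f j / b ^ j| = dist (∑ j ∈ range k, f j / b ^ j) z := by
        rw [dist_comm, Real.dist_eq]
    _ ≤ C * b⁻¹ ^ k / (1 - b⁻¹) :=
      dist_le_of_le_geometric_of_tendsto _ _ (by linarith) step hz.tendsto_sum_nat k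
    _ ≤ C * b⁻¹ ^ k / (1 / 2) := by
      gcongr
      linarith
    _ = 2 * C / b ^ k := by
      rw [inv_pow]
      ring

lemma dimH_le_logb_card_of_hasSum (hb : 2 ≤ b) (hV : V.Nonempty)
    (h : ∀ z ∈ s, ∃ v : ℕ → ℝ, (∀ j, v j ∈ V) ∧ HasSum (fun j => v j / b ^ j) z) :
    dimH s ≤ ENNReal.ofReal (logb b #V) := by
  obtain ⟨C, hC⟩ := (V.image abs).exists_le
  have abs_le_C {v : ℝ} (hv : v ∈ V) : |v| ≤ C := hC _ (mem_image_of_mem _ hv)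
  have C_nonneg : 0 ≤ C := (abs_nonneg _).trans (abs_le_C hV.choose_spec)
  refine dimH_le_logb_of_forall_subset_biUnion_closedBall (C := 2 * C) (by linarith) hV.card_pos
    (by positivity) fun j => ?_
  refine ⟨(Fintype.piFinset fun _ : Fin j => V).image fun v => ∑ i : Fin j, v i / b ^ (i : ℕ),
    card_image_le.trans_eq (Fintype.card_piFinset_const V j), fun z hz => ?_⟩
  obtain ⟨v, hv, hz⟩ := h z hz
  refine Set.mem_iUnion₂.2 ⟨∑ i : Fin j, v i / b ^ (i : ℕ),
    mem_image.2 ⟨fun i => v i, Fintype.mem_piFinset.2 fun i => hv i, rfl⟩, ?_⟩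
  rw [Metric.mem_closedBall, Real.dist_eq, Fin.sum_univ_eq_sum_range fun i => v i / b ^ i]
  exact abs_sub_sum_range_le_of_hasSum hb (fun i => abs_le_C (hv i)) hz j

lemma logb_card_le_dimH_of_hasSum (hb : 2 ≤ b) (hV : 1 < #V) {δ C : ℝ} (hδ : 2 * C / b < δ)
    (separated : (V : Set ℝ).Pairwise fun v w => δ ≤ |v - w|)
    (bounded : ∀ v ∈ V, ∀ w ∈ V, |v - w| ≤ C)
    (h : ∀ v : ℕ → ℝ, (∀ j, v j ∈ V) → ∃ z ∈ s, HasSum (fun j => v j / b ^ j) z) :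
    ENNReal.ofReal (logb b #V) ≤ dimH s := by
  set v : Fin #V → ℝ := fun i => V.equivFin.symm i
  have v_mem (i : Fin #V) : v i ∈ V := (V.equivFin.symm i).2
  have v_injective : Function.Injective v := Subtype.val_injective.comp V.equivFin.symm.injective
  choose Φ Φ_mem hΦ using fun x : ℕ → Fin #V => h (fun j => v (x j)) fun j => v_mem _
  refine (logb_le_dimH_range_of_le_dist hV (by linarith) (sub_pos.2 hδ) ?_).trans
    (dimH_mono (Set.range_subset_iff.2 Φ_mem))
  intro x y hxy
  set k := PiNat.firstDiff x y
  have sum_sub : HasSum (fun j => (v (x j) - v (y j)) / b ^ j) (Φ x - Φ y) := by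
    simpa only [sub_div] using (hΦ x).sub (hΦ y)
  have tail_le := abs_sub_sum_range_le_of_hasSum hb
    (fun j => bounded _ (v_mem (x j)) _ (v_mem (y j))) sum_sub (k + 1)
  have head_eq_zero : ∑ j ∈ range k, (v (x j) - v (y j)) / b ^ j = 0 := sum_eq_zero fun j hj => by
    rw [PiNat.apply_eq_of_lt_firstDiff (mem_range.1 hj), sub_self, zero_div]
  rw [sum_range_succ, head_eq_zero, zero_add] at tail_le
  have le_first : δ / b ^ k ≤ |(v (x k) - v (y k)) / b ^ k| := by
    rw [abs_div, abs_of_pos (by positivity : 0 < b ^ k)]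
    gcongr
    exact separated (v_mem _) (v_mem _) (v_injective.ne (PiNat.apply_firstDiff_ne hxy))
  calc (δ - 2 * C / b) / b ^ k = δ / b ^ k - 2 * C / b ^ (k + 1) := by
        rw [sub_div, div_div, pow_succ']
    _ ≤ |Φ x - Φ y| := by
      rw [abs_sub_comm] at tail_le
      linarith [abs_sub_abs_le_abs_sub ((v (x k) - v (y k)) / b ^ k) (Φ x - Φ y)]

lemma hasSum_blocks {d : ℕ → ℝ} {C : ℝ} (hb : 1 < b) (hd : ∀ i, |d i| ≤ C) (n : ℕ) [NeZero n] :
    HasSum (fun j : ℕ => (∑ p : Fin n, d ((Nat.divModEquiv n).symm (j, p)) / b ^ ((p : ℕ) + 1)) /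
      (b ^ n) ^ j) (∑' i, d i / b ^ (i + 1)) := by
  have : 0 < b := zero_lt_one.trans hb
  have summable : Summable fun i => d i / b ^ (i + 1) := by
    refine .of_norm_bounded (g := fun i : ℕ => C / b * b⁻¹ ^ i)
      ((summable_geometric_of_lt_one (by positivity) (inv_lt_one_of_one_lt₀ hb)).mul_left _)
      fun i => ?_
    rw [norm_div, norm_eq_abs, norm_of_nonneg (by positivity), inv_pow, ← div_eq_mul_inv, div_div,
      ← pow_succ']
    gcongr
    exact hd i
  refine ((Nat.divModEquiv n).symm.hasSum_iff.2 summable.hasSum).prod_fiberwise fun j => ?_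
  have summand (p : Fin n) : d ((Nat.divModEquiv n).symm (j, p)) / b ^ ((p : ℕ) + 1) / (b ^ n) ^ j =
      ((fun i => d i / b ^ (i + 1)) ∘ (Nat.divModEquiv n).symm) (j, p) := by
    rw [Function.comp_apply, div_div, Nat.divModEquiv_symm_apply, add_assoc, pow_add b (j * n),
      mul_comm j, pow_mul, mul_comm (b ^ _)]
  simp only [sum_div, summand]
  exact hasSum_fintype _

end DigitExpansions

/-! ### The dimension of the projected Cantor set -/

section CornerDimension

variable {t : ℝ} {n : ℕ}

lemma abs_le_of_mem_Omega (ht : t ∈ Set.Icc 0 1) {x : ℝ} (hx : x ∈ Omega t) : |x| ≤ 6 := by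
  obtain ⟨t_nonneg, t_le⟩ := ht
  rw [abs_le]
  rcases hx with rfl | rfl | rfl | rfl <;> constructor <;> linarith

lemma exists_blocks_of_mem_cornerC (ht : t ∈ Set.Icc 0 1) (hn : n ≠ 0) {z : ℝ}
    (hz : z ∈ cornerC t) : ∃ w : ℕ → Fin n → ℝ, (∀ j p, w j p ∈ Omega t) ∧
      HasSum (fun j => (∑ p, w j p / 4 ^ ((p : ℕ) + 1)) / (4 ^ n) ^ j) z := by
  have : NeZero n := ⟨hn⟩
  obtain ⟨d, hd, rfl⟩ := hz
  exact ⟨fun j p => d ((Nat.divModEquiv n).symm (j, p)), fun j p => hd _,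
    hasSum_blocks (by norm_num) (fun i => abs_le_of_mem_Omega ht (hd i)) n⟩

lemma exists_mem_cornerC_hasSum_blocks (ht : t ∈ Set.Icc 0 1) (hn : n ≠ 0) {w : ℕ → Fin n → ℝ}
    (hw : ∀ j p, w j p ∈ Omega t) :
    ∃ z ∈ cornerC t, HasSum (fun j => (∑ p, w j p / 4 ^ ((p : ℕ) + 1)) / (4 ^ n) ^ j) z := by
  have : NeZero n := ⟨hn⟩
  set d : ℕ → ℝ := Function.uncurry w ∘ Nat.divModEquiv n
  have hd (i : ℕ) : d i ∈ Omega t := hw _ _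
  have blocks := hasSum_blocks (b := 4) (by norm_num) (fun i => abs_le_of_mem_Omega ht (hd i)) n
  simp only [d, Function.comp_apply, Equiv.apply_symm_apply, Function.uncurry_apply_pair] at blocks
  exact ⟨_, ⟨d, hd, rfl⟩, blocks⟩

lemma exists_card_lt_of_hasExactOverlap (h : HasExactOverlap t) :
    ∃ n ≠ 0, ∃ V : Finset ℝ, V.Nonempty ∧ #V < 4 ^ n ∧
      ∀ w : Fin n → ℝ, (∀ p, w p ∈ Omega t) → ∑ p, w p / 4 ^ ((p : ℕ) + 1) ∈ V := by
  obtain ⟨n, n_pos, c, d, hc, hd, hne, heq⟩ := h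
  set digits : Finset ℝ := {0, 3 * t, 3, 3 * t + 3}
  set words : Finset (Fin n → ℝ) := Fintype.piFinset fun _ => digits
  set value : (Fin n → ℝ) → ℝ := fun w => ∑ p, w p / 4 ^ ((p : ℕ) + 1)
  have mem_words {w : Fin n → ℝ} (hw : ∀ p, w p ∈ Omega t) : w ∈ words :=
    Fintype.mem_piFinset.2 fun p => by simpa [digits, Omega] using hw p
  refine ⟨n, n_pos.ne', words.image value, ⟨_, mem_image_of_mem _ (mem_words hc)⟩, ?_,
    fun w hw => mem_image_of_mem _ (mem_words hw)⟩
  calc #(words.image value) < #words := by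
        refine card_image_le.lt_of_ne fun card_eq => hne ?_
        exact card_image_iff.1 card_eq (mem_words hc) (mem_words hd) heq
    _ = #digits ^ n := Fintype.card_piFinset_const _ _
    _ ≤ 4 ^ n := Nat.pow_le_pow_left card_le_four n

lemma two_le_four_pow (hn : n ≠ 0) : (2 : ℝ) ≤ 4 ^ n :=
  (by norm_num : (2 : ℝ) ≤ 4).trans (le_self_pow₀ (by norm_num) hn)

lemma dimH_cornerC_lt_one_of_hasExactOverlap (ht : t ∈ Set.Icc 0 1) (h : HasExactOverlap t) :
    dimH (cornerC t) < 1 := by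
  obtain ⟨n, hn, V, hV, card_lt, value_mem⟩ := exists_card_lt_of_hasExactOverlap h
  have base := two_le_four_pow hn
  refine (dimH_le_logb_card_of_hasSum base hV fun z hz => ?_).trans_lt ?_
  · obtain ⟨w, hw, hz⟩ := exists_blocks_of_mem_cornerC ht hn hz
    exact ⟨_, fun j => value_mem (w j) (hw j), hz⟩
  · rw [ENNReal.ofReal_lt_one, logb_lt_iff_lt_rpow (by linarith) (by exact_mod_cast hV.card_pos),
      rpow_one]
    exact_mod_cast card_lt

lemma exists_mem_cornerC_hasSum_project (ht : t ∈ Set.Icc 0 1) (hn : n ≠ 0) {x : ℕ → ℤ × ℤ}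
    (hx : ∀ j, x j ∈ cornerPairs n) :
    ∃ z ∈ cornerC t, HasSum (fun j => 3 / 4 ^ n * project t (x j) / (4 ^ n) ^ j) z := by
  choose A hA B hB hAB using fun j => exists_index_sets_of_mem_cornerPairs (hx j)
  simpa only [sum_indexWord_div t (hA _) (hB _), hAB] using exists_mem_cornerC_hasSum_blocks ht hn
    fun j p => indexWord_mem_Omega t n (A j) (B j) p

lemma three_mul_project_mem_Icc (ht : t ∈ Set.Icc 0 1) {x : ℤ × ℤ} (hx : x ∈ cornerPairs n) :
    3 * project t x ∈ Set.Icc 0 (2 * 4 ^ n) := by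
  obtain ⟨fst_mem, snd_mem⟩ := mem_product.1 hx
  have fst_nonneg : (0 : ℝ) ≤ x.1 := by exact_mod_cast nonneg_of_mem_zeroOneExpansions fst_mem
  have snd_nonneg := snd_nonneg_of_mem_cornerPairs hx
  have fst_le : (3 * x.1 : ℝ) ≤ 4 ^ n := by
    exact_mod_cast (three_mul_lt_of_mem_zeroOneExpansions fst_mem).le
  have snd_le : (3 * x.2 : ℝ) ≤ 4 ^ n := by
    exact_mod_cast (three_mul_lt_of_mem_zeroOneExpansions snd_mem).le
  have mul_nonneg : 0 ≤ t * x.2 := mul_nonneg ht.1 snd_nonneg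
  have mul_le : t * x.2 ≤ x.2 := mul_le_of_le_one_left snd_nonneg ht.2
  rw [project]
  constructor <;> linarith

lemma abs_floor_sub_floor_le (x y : ℝ) : |(⌊x⌋ - ⌊y⌋ : ℝ)| ≤ |x - y| + 1 := by
  have frac_sub_le := abs_sub_le_of_nonneg_of_le (Int.fract_nonneg x) (Int.fract_lt_one x).le
    (Int.fract_nonneg y) (Int.fract_lt_one y).le
  calc |(⌊x⌋ - ⌊y⌋ : ℝ)| = |x - y - (Int.fract x - Int.fract y)| := by
        rw [Int.fract, Int.fract, sub_sub_sub_comm, sub_sub_cancel, sub_sub_cancel]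
    _ ≤ |x - y| + |Int.fract x - Int.fract y| := abs_sub _ _
    _ ≤ |x - y| + 1 := by gcongr

-- Keep one point over each integer part in the most popular residue class modulo `k + 1`.
lemma exists_subset_card_image_floor_le_and_pairwise (S : Finset ℝ) (k : ℕ) :
    ∃ V ⊆ S, #(S.image Int.floor) ≤ (k + 1) * #V ∧
      (V : Set ℝ).Pairwise fun v w => (k : ℝ) ≤ |v - w| := by
  set I := S.image Int.floor
  obtain ⟨c, -, card_le⟩ := exists_le_card_fiber_of_nsmul_le_card_of_maps_to
    (s := I) (t := Ico 0 (k + 1 : ℤ)) (f := (· % (k + 1 : ℤ))) (b := (#I : ℝ) / (k + 1))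
    (fun z _ => mem_Ico.2 ⟨Int.emod_nonneg z (by positivity), Int.emod_lt_of_pos z (by positivity)⟩)
    ⟨0, by simp⟩ (by
      rw [Int.card_Ico, sub_zero, nsmul_eq_mul, ← Int.natCast_succ, Int.toNat_natCast,
        Nat.cast_succ]
      exact (mul_div_cancel₀ (#I : ℝ) (by positivity)).le)
  set J := I.filter (· % (k + 1 : ℤ) = c)
  have exists_point (z : ℤ) (hz : z ∈ J) : ∃ v ∈ S, ⌊v⌋ = z := mem_image.1 (mem_filter.1 hz).1
  choose! g g_mem floor_g using exists_point
  have g_injOn : Set.InjOn g J := fun z hz z' hz' h => by rw [← floor_g z hz, h, floor_g z' hz']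
  refine ⟨J.image g, image_subset_iff.2 g_mem, ?_, ?_⟩
  · rw [card_image_of_injOn g_injOn]
    rw [div_le_iff₀' (by positivity)] at card_le
    exact_mod_cast card_le
  · rw [coe_image]
    rintro _ ⟨z, hz, rfl⟩ _ ⟨z', hz', rfl⟩ hne
    have z_ne : z ≠ z' := fun h => hne (congrArg g h)
    have dvd : (k + 1 : ℤ) ∣ |z - z'| := (dvd_abs _ _).2 <|
      Int.ModEq.dvd <| (mem_filter.1 hz').2.trans (mem_filter.1 hz).2.symm
    have floor_dist : (k + 1 : ℝ) ≤ |(z - z' : ℝ)| := by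
      exact_mod_cast Int.le_of_dvd (abs_pos.2 (sub_ne_zero.2 z_ne)) dvd
    have floor_sub_le := abs_floor_sub_floor_le (g z) (g z')
    rw [floor_g z hz, floor_g z' hz'] at floor_sub_le
    linarith

lemma logb_card_le_dimH_cornerC (ht : t ∈ Set.Icc 0 1) (hn : n ≠ 0) {V : Finset ℝ}
    (hV : V ⊆ (cornerPairs n).image (project t)) (hV_card : 1 < #V)
    (separated : (V : Set ℝ).Pairwise fun v w => 3 ≤ |v - w|) :
    ENNReal.ofReal (logb (4 ^ n) #V) ≤ dimH (cornerC t) := by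
  set digit : ℝ → ℝ := fun v => 3 / 4 ^ n * v
  have digit_injective : Function.Injective digit := mul_right_injective₀ (by positivity)
  have digit_mem {v : ℝ} (hv : v ∈ V) : digit v ∈ Set.Icc 0 2 := by
    obtain ⟨x, hx, rfl⟩ := mem_image.1 (hV hv)
    obtain ⟨nonneg, le⟩ := three_mul_project_mem_Icc ht hx
    simp only [digit, div_mul_eq_mul_div]
    exact ⟨by positivity, div_le_of_le_mul₀ (by positivity) zero_le_two le⟩
  rw [← card_image_of_injective V digit_injective] at hV_card ⊢
  refine logb_card_le_dimH_of_hasSum (δ := 9 / 4 ^ n) (C := 2) (two_le_four_pow hn) hV_card ?_ ?_ ?_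
    fun v hv => ?_
  · gcongr
    norm_num
  · rw [coe_image]
    rintro _ ⟨v, hv, rfl⟩ _ ⟨w, hw, rfl⟩ hne
    rw [← mul_sub, abs_mul, abs_of_pos (by positivity)]
    calc (9 : ℝ) / 4 ^ n = 3 / 4 ^ n * 3 := by ring
      _ ≤ 3 / 4 ^ n * |v - w| := by
        gcongr
        exact separated hv hw (ne_of_apply_ne digit hne)
  · simp only [forall_mem_image]
    intro v hv w hw
    have mem_v := digit_mem hv
    have mem_w := digit_mem hw
    exact abs_sub_le_of_nonneg_of_le mem_v.1 mem_v.2 mem_w.1 mem_w.2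
  · have exists_pair (j : ℕ) : ∃ x ∈ cornerPairs n, digit (project t x) = v j := by
      obtain ⟨u, hu, hv⟩ := mem_image.1 (hv j)
      obtain ⟨x, hx, rfl⟩ := mem_image.1 (hV hu)
      exact ⟨x, hx, hv⟩
    choose x hx hxv using exists_pair
    simpa only [← hxv] using exists_mem_cornerC_hasSum_project ht hn hx

lemma log_card_floorSet_le_of_dimH_lt (ht : t ∈ Set.Icc 0 1) {s : ℝ≥0} (hs : dimH (cornerC t) < s)
    (n : ℕ) : log #(floorSet t n) ≤ log 4 + s * n * log 4 := by
  obtain ⟨V, hV, card_le, separated⟩ :=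
    exists_subset_card_image_floor_le_and_pairwise ((cornerPairs n).image (project t)) 3
  replace card_le : #(floorSet t n) ≤ 4 * #V := by rwa [image_image] at card_le
  have card_floorSet_pos : 0 < #(floorSet t n) := (floorSet_nonempty t n).card_pos
  have card_V_pos : 0 < #V := by omega
  have log_card_V_le : log #V ≤ s * n * log 4 := by
    obtain le_one | one_lt := le_or_gt #V 1
    · rw [(by omega : #V = 1), Nat.cast_one, log_one]
      positivity
    · have hn : n ≠ 0 := by
        rintro rfl
        have := (card_le_card hV).trans card_image_le
        rw [card_cornerPairs, pow_zero] at this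
        omega
      have logb_lt := (logb_card_le_dimH_cornerC ht hn hV one_lt separated).trans_lt hs
      have logb_nonneg : 0 ≤ logb (4 ^ n) #V :=
        Real.logb_nonneg (by linarith [two_le_four_pow hn]) (by exact_mod_cast card_V_pos)
      rw [ENNReal.ofReal_lt_coe_iff logb_nonneg, logb, log_pow, div_lt_iff₀ (by positivity)]
        at logb_lt
      linarith
  calc log #(floorSet t n) ≤ log (4 * #V) := by
        gcongr
        exact_mod_cast card_le
    _ = log 4 + log #V := log_mul (by norm_num) (by positivity)
    _ ≤ log 4 + s * n * log 4 := by gcongr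

end CornerDimension

end FourCorner

theorem dimH_lt_one_iff_overlap (t : ℝ) (ht : t ∈ Set.Ioo (0:ℝ) 1) :
    dimH (cornerC t) < 1 ↔ HasExactOverlap t := by
  have ht' := Set.Ioo_subset_Icc_self ht
  refine ⟨fun dim_lt => ?_, FourCorner.dimH_cornerC_lt_one_of_hasExactOverlap ht'⟩
  by_contra no_overlap
  obtain ⟨s, dim_lt_s, s_lt⟩ := ENNReal.lt_iff_exists_nnreal_btwn.1 dim_lt
  obtain ⟨n, hn⟩ := FourCorner.exists_lt_log_card_floorSet ht'
    (FourCorner.frequently_isSeparated_of_not_hasExactOverlap ht no_overlap)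
    (by exact_mod_cast s_lt : (s : ℝ) < 1) (Real.log 4)
  exact hn.not_ge (FourCorner.log_card_floorSet_le_of_dimH_lt ht' dim_lt_s n)
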